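/- The ℂ-linear span of the one hundred functions θ⁴[δᵢ]θ⁸[δⱼ], where δᵢ and δⱼ independently range over the ten even characteristics, has dimension exactly 34. -/

import Mathlib

open scoped BigOperators

namespace TwoLoop

/-- 2×2 complex matrices. -/
abbrev Mat2 := Matrix (Fin 2) (Fin 2) ℂ

/-- The genus-2 Siegel upper half space: symmetric 2×2 complex matrices with
positive definite imaginary part. -/
def SiegelH2 : Set Mat2 := {τ | τ.transpose = τ ∧ (τ.map Complex.im).PosDef}

/-- A (half-integer) theta characteristic `[a;b]`, recorded by its rows `a, b ∈ {0,1}²`. -/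
abbrev Char := (Fin 2 → ℤ) × (Fin 2 → ℤ)

/-- The theta constant `θ[a;b](τ) = Σ_{n ∈ ℤ²} exp(πi (n+a/2)ᵀ τ (n+a/2) + πi (n+a/2)·b)`. -/
noncomputable def theta (κ : Char) (τ : Mat2) : ℂ :=
  ∑' n : Fin 2 → ℤ,
    Complex.exp ((Real.pi : ℂ) * Complex.I *
      ((∑ i, ∑ j, ((n i : ℂ) + (κ.1 i : ℂ) / 2) * τ i j * ((n j : ℂ) + (κ.1 j : ℂ) / 2))
        + ∑ i, ((n i : ℂ) + (κ.1 i : ℂ) / 2) * (κ.2 i : ℂ)))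

/-- The ten even characteristics δ₁,…,δ₁₀. -/
def δev : Fin 10 → Char :=
  ![(![0,0], ![0,0]), (![0,0], ![0,1]), (![0,0], ![1,0]), (![0,0], ![1,1]),
    (![0,1], ![0,0]), (![0,1], ![1,0]), (![1,0], ![0,0]), (![1,0], ![0,1]),
    (![1,1], ![0,0]), (![1,1], ![1,1])]

/-- The six odd characteristics ν₁,…,ν₆. -/
def νodd : Fin 6 → Char :=
  ![(![0,1], ![0,1]), (![1,0], ![1,0]), (![0,1], ![1,1]),
    (![1,0], ![1,1]), (![1,1], ![0,1]), (![1,1], ![1,0])]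

/-- `Θ[ε](τ) = θ[ε;0](2τ)`. -/
noncomputable def Θf (ε : Fin 2 → ℤ) (τ : Mat2) : ℂ := theta (ε, ![0,0]) ((2 : ℂ) • τ)

noncomputable def P0 (τ : Mat2) : ℂ :=
  Θf ![0,0] τ ^ 4 + Θf ![0,1] τ ^ 4 + Θf ![1,0] τ ^ 4 + Θf ![1,1] τ ^ 4
noncomputable def P1 (τ : Mat2) : ℂ :=
  2 * (Θf ![0,0] τ ^ 2 * Θf ![0,1] τ ^ 2 + Θf ![1,0] τ ^ 2 * Θf ![1,1] τ ^ 2)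
noncomputable def P2 (τ : Mat2) : ℂ :=
  2 * (Θf ![0,0] τ ^ 2 * Θf ![1,0] τ ^ 2 + Θf ![0,1] τ ^ 2 * Θf ![1,1] τ ^ 2)
noncomputable def P3 (τ : Mat2) : ℂ :=
  2 * (Θf ![0,0] τ ^ 2 * Θf ![1,1] τ ^ 2 + Θf ![0,1] τ ^ 2 * Θf ![1,0] τ ^ 2)
noncomputable def P4 (τ : Mat2) : ℂ :=
  4 * (Θf ![0,0] τ * Θf ![0,1] τ * Θf ![1,0] τ * Θf ![1,1] τ)

/-- The vector `(P₀,…,P₄)`. -/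
noncomputable def Pv : Fin 5 → Mat2 → ℂ := ![P0, P1, P2, P3, P4]

open MvPolynomial in
/-- The Igusa quartic as a polynomial in `x₀,…,x₄`. -/
noncomputable def I4poly : MvPolynomial (Fin 5) ℂ :=
  X 4 ^ 4 + X 4 ^ 2 * X 0 ^ 2 - X 4 ^ 2 * X 1 ^ 2 - X 4 ^ 2 * X 2 ^ 2 - X 4 ^ 2 * X 3 ^ 2
    + X 1 ^ 2 * X 2 ^ 2 + X 1 ^ 2 * X 3 ^ 2 + X 2 ^ 2 * X 3 ^ 2
    - 2 * (X 0 * X 1 * X 2 * X 3)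

/-- The signature `⟨κ|λ⟩ = exp(πi(a_κ·b_λ − b_κ·a_λ))`. -/
noncomputable def sig (κ lam : Char) : ℂ :=
  Complex.exp ((Real.pi : ℂ) * Complex.I *
    (((∑ i, κ.1 i * lam.2 i : ℤ) : ℂ) - ((∑ i, κ.2 i * lam.1 i : ℤ) : ℂ)))

/-- Componentwise mod-2 sum of characteristics. -/
def addChar (κ lam : Char) : Char :=
  (fun i => (κ.1 i + lam.1 i) % 2, fun i => (κ.2 i + lam.2 i) % 2)

/-- For each even characteristic `δ_d`, the ordering `(k₁,…,k₆)` of `{1,…,6}` (0-indexed) whose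
first three entries form the triad of odd characteristics with `δ_d = ν_{k₁}+ν_{k₂}+ν_{k₃}`
and whose last three are the complementary indices. -/
def triad : Fin 10 → Fin 6 → Fin 6 :=
  ![![0,3,5,1,2,4], ![0,1,5,2,3,4], ![0,1,4,2,3,5], ![0,3,4,1,2,5], ![0,1,3,2,4,5],
    ![0,4,5,1,2,3], ![0,1,2,3,4,5], ![0,2,3,1,4,5], ![0,2,5,1,3,4], ![0,2,4,1,3,5]]

/-- D'Hoker–Phong's `Ξ₆[δ]`. -/
noncomputable def Xi6 (d : Fin 10) (τ : Mat2) : ℂ :=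
  ∑ i : Fin 3, ∑ j : Fin 3,
    if i < j then
      sig (νodd (triad d (Fin.castLE (by norm_num) i))) (νodd (triad d (Fin.castLE (by norm_num) j))) *
        ∏ m : Fin 3,
          theta (addChar (addChar (νodd (triad d (Fin.castLE (by norm_num) i)))
              (νodd (triad d (Fin.castLE (by norm_num) j))))
            (νodd (triad d (⟨m.1 + 3, by omega⟩ : Fin 6)))) τ ^ 4
    else 0

/-- The formal derivative `∂I₄/∂θ⁴[δ]` of the Igusa quartic with respect to the ten fourth
powers of the even theta constants, regarded as independent variables. -/
noncomputable def Dd (d : Fin 10) (τ : Mat2) : ℂ :=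
  (1 / 48 : ℂ) *
    (theta (δev d) τ ^ 4 * (∑ d' : Fin 10, theta (δev d') τ ^ 8) - 4 * theta (δev d) τ ^ 12)

/-- `f_δ = 2Ξ₆[δ] − ∂I₄/∂θ⁴[δ]`. -/
noncomputable def fδ (d : Fin 10) (τ : Mat2) : ℂ := 2 * Xi6 d τ - Dd d τ

/-- `Ψ₆`, the weight-6 modular form. -/
noncomputable def Ψ6 (τ : Mat2) : ℂ :=
  P0 τ ^ 3 - 9 * P0 τ * (P1 τ ^ 2 + P2 τ ^ 2 + P3 τ ^ 2 - 4 * P4 τ ^ 2)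
    + 54 * (P1 τ * P2 τ * P3 τ)

/-- `Ψ₁₀`, the weight-10 modular form. -/
noncomputable def Ψ10 (τ : Mat2) : ℂ := ∏ d : Fin 10, theta (δev d) τ ^ 2

/-- A characteristic is even when `a·b` is even. -/
def IsEvenChar (κ : Char) : Prop := (∑ i, κ.1 i * κ.2 i) % 2 = 0

/-- A characteristic is odd when `a·b` is odd. -/
def IsOddChar (κ : Char) : Prop := (∑ i, κ.1 i * κ.2 i) % 2 = 1


/-- exponential of the quadratic form, `e τ k = exp(πi/4 · kᵀτk)` (for symmetric τ). -/
noncomputable def ee (τ : Mat2) (k : ℤ × ℤ) : ℂ :=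
  Complex.exp ((Real.pi : ℂ) * Complex.I / 4 *
    ((k.1 : ℂ) ^ 2 * τ 0 0 + 2 * (k.1 : ℂ) * (k.2 : ℂ) * τ 0 1 + (k.2 : ℂ) ^ 2 * τ 1 1))

lemma posdef_bound {a b c : ℝ} (ha : 0 < a) (hc : 0 < c) (hdet : 0 < a * c - b ^ 2) :
    ∃ ε : ℝ, 0 < ε ∧ ∀ x y : ℝ, ε * (x ^ 2 + y ^ 2) ≤ a * x ^ 2 + 2 * b * x * y + c * y ^ 2 := by
  refine ⟨(a * c - b ^ 2) / (a + c), by positivity, fun x y => ?_⟩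
  rw [div_mul_eq_mul_div, div_le_iff₀ (by positivity)]
  nlinarith [sq_nonneg (a * x + b * y), sq_nonneg (b * x + c * y)]

lemma siegel_facts {τ : Mat2} (h : τ ∈ SiegelH2) :
    τ 1 0 = τ 0 1 ∧ 0 < (τ 0 0).im ∧ 0 < (τ 1 1).im ∧
      0 < (τ 0 0).im * (τ 1 1).im - (τ 0 1).im ^ 2 := by
  obtain ⟨h1, h2⟩ := h
  have hs : τ 1 0 = τ 0 1 := by
    have := congrFun (congrFun h1 0) 1
    simpa using this
  refine ⟨hs, ?_, ?_, ?_⟩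
  · simpa using h2.diag_pos (i := 0)
  · simpa using h2.diag_pos (i := 1)
  · have := h2.det_pos
    rw [Matrix.det_fin_two] at this
    simp only [Matrix.map_apply, hs] at this
    nlinarith [this]

lemma summable_gauss {ε : ℝ} (hε : 0 < ε) :
    Summable (fun n : ℤ => Real.exp (-Real.pi * (ε * (n : ℝ) ^ 2))) := by
  have := summable_pow_mul_jacobiTheta₂_term_bound 0 hε 0
  simpa using this

lemma norm_ee (τ : Mat2) (k : ℤ × ℤ) :
    ‖ee τ k‖ = Real.exp (-Real.pi / 4 * ((τ 0 0).im * (k.1 : ℝ) ^ 2 +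
      2 * (τ 0 1).im * k.1 * k.2 + (τ 1 1).im * (k.2 : ℝ) ^ 2)) := by
  rw [ee, Complex.norm_exp]
  congr 1
  have h : (Real.pi : ℂ) * Complex.I / 4 *
    ((k.1 : ℂ) ^ 2 * τ 0 0 + 2 * (k.1 : ℂ) * (k.2 : ℂ) * τ 0 1 + (k.2 : ℂ) ^ 2 * τ 1 1) =
    ((Real.pi / 4 : ℝ) : ℂ) * (Complex.I * ((((k.1 : ℝ) ^ 2 : ℝ) : ℂ) * τ 0 0 +
      ((2 * (k.1 : ℝ) * k.2 : ℝ) : ℂ) * τ 0 1 + (((k.2 : ℝ) ^ 2 : ℝ) : ℂ) * τ 1 1)) := by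
    push_cast; ring
  rw [h, Complex.re_ofReal_mul, Complex.I_mul_re]
  simp only [Complex.add_im, Complex.im_ofReal_mul]
  ring

lemma summable_ee {τ : Mat2} (h1 : 0 < (τ 0 0).im) (h2 : 0 < (τ 1 1).im)
    (h3 : 0 < (τ 0 0).im * (τ 1 1).im - (τ 0 1).im ^ 2) : Summable (fun k => ‖ee τ k‖) := by
  obtain ⟨ε, hε, hb⟩ := posdef_bound h1 h2 h3
  have hs := summable_gauss (ε := ε / 4) (by positivity)
  have := hs.mul_of_nonneg hs (fun _ => (Real.exp_pos _).le) (fun _ => (Real.exp_pos _).le)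
  refine Summable.of_nonneg_of_le (fun _ => norm_nonneg _) (fun k => ?_) this
  rw [norm_ee, ← Real.exp_add]
  apply Real.exp_le_exp.2
  have := mul_le_mul_of_nonneg_left (hb k.1 k.2) (show 0 ≤ Real.pi / 4 by positivity)
  nlinarith [this]

lemma summable_ee_shift {τ : Mat2} (hs : Summable (fun k => ‖ee τ k‖)) (a : ℤ × ℤ) :
    Summable (fun n : ℤ × ℤ => ‖ee τ (2 * n.1 + a.1, 2 * n.2 + a.2)‖) := by
  refine hs.comp_injective (i := fun n : ℤ × ℤ => (2 * n.1 + a.1, 2 * n.2 + a.2)) ?_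
  rintro ⟨x, y⟩ ⟨z, w⟩ h
  simp only [Prod.mk.injEq] at h ⊢
  omega

/-- second order theta constant indexed by an arbitrary integer vector -/
noncomputable def Th (τ : Mat2) (a : ℤ × ℤ) : ℂ :=
  ∑' n : ℤ × ℤ, ee ((2 : ℂ) • τ) (2 * n.1 + a.1, 2 * n.2 + a.2)

lemma Th_shift (τ : Mat2) (a b : ℤ × ℤ) : Th τ (a.1 + 2 * b.1, a.2 + 2 * b.2) = Th τ a := by
  unfold Th
  rw [← (Equiv.addRight b).tsum_eq (fun n : ℤ × ℤ => ee ((2 : ℂ) • τ) (2 * n.1 + a.1, 2 * n.2 + a.2))]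
  refine tsum_congr fun n => ?_
  congr 2
  · simp; ring
  · simp; ring

lemma theta_eq {τ : Mat2} (hτ : τ 1 0 = τ 0 1) (a1 a2 b1 b2 : ℤ) :
    theta (![a1, a2], ![b1, b2]) τ = ∑' n : ℤ × ℤ, ee τ (2 * n.1 + a1, 2 * n.2 + a2) *
      Complex.exp ((Real.pi : ℂ) * Complex.I * ((n.1 + (a1 : ℂ) / 2) * b1 + (n.2 + (a2 : ℂ) / 2) * b2)) := by
  unfold theta ee
  rw [← (finTwoArrowEquiv ℤ).symm.tsum_eq]
  refine tsum_congr fun n => ?_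
  rw [← Complex.exp_add]
  congr 1
  simp only [Fin.sum_univ_two, finTwoArrowEquiv_symm_apply, Matrix.cons_val_zero, Matrix.cons_val_one, hτ]
  push_cast
  ring

/-- change of variables `(m,n) = (k+l+c, k-l)` -/
def cvEquiv : (Fin 2 × (ℤ × ℤ)) ≃ ℤ × ℤ where
  toFun x := (x.2.1 + x.2.2 + (x.1 : ℤ), x.2.1 - x.2.2)
  invFun y := (⟨((y.1 + y.2) % 2).toNat, by omega⟩, ((y.1 + y.2) / 2, (y.1 - y.2) / 2))
  left_inv := by
    rintro ⟨⟨c, hc⟩, k, l⟩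
    simp only [Prod.mk.injEq, Fin.mk.injEq]
    refine ⟨?_, ?_, ?_⟩ <;> omega
  right_inv := by
    rintro ⟨m, n⟩
    simp only [Prod.mk.injEq]
    refine ⟨?_, ?_⟩ <;> omega

def cv2 : ((Fin 2 × Fin 2) × ((ℤ × ℤ) × (ℤ × ℤ))) ≃ ((ℤ × ℤ) × (ℤ × ℤ)) where
  toFun x := ((x.2.1.1 + x.2.2.1 + (x.1.1 : ℤ), x.2.1.2 + x.2.2.2 + (x.1.2 : ℤ)),
    (x.2.1.1 - x.2.2.1, x.2.1.2 - x.2.2.2))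
  invFun y := ((⟨((y.1.1 + y.2.1) % 2).toNat, by omega⟩, ⟨((y.1.2 + y.2.2) % 2).toNat, by omega⟩),
    (((y.1.1 + y.2.1) / 2, (y.1.2 + y.2.2) / 2), ((y.1.1 - y.2.1) / 2, (y.1.2 - y.2.2) / 2)))
  left_inv := by
    rintro ⟨⟨⟨c, hc⟩, ⟨c', hc'⟩⟩, ⟨k, k'⟩, ⟨l, l'⟩⟩
    simp only [Prod.mk.injEq, Fin.mk.injEq]
    refine ⟨⟨?_, ?_⟩, ⟨?_, ?_⟩, ?_, ?_⟩ <;> omega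
  right_inv := by
    rintro ⟨⟨m, m'⟩, ⟨n, n'⟩⟩
    simp only [Prod.mk.injEq]
    refine ⟨⟨?_, ?_⟩, ?_, ?_⟩ <;> omega

lemma exp_pi_int (n : ℤ) : Complex.exp ((Real.pi : ℂ) * Complex.I * n) = (-1 : ℂ) ^ n := by
  rw [mul_comm, Complex.exp_int_mul, Complex.exp_pi_mul_I]

lemma siegel_two {τ : Mat2} (h : τ ∈ SiegelH2) : Summable (fun k => ‖ee ((2 : ℂ) • τ) k‖) := by
  obtain ⟨-, h1, h2, h3⟩ := siegel_facts h
  have e (i j) : (((2 : ℂ) • τ) i j).im = 2 * (τ i j).im := by simp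
  apply summable_ee <;> simp only [e] <;> nlinarith

lemma theta_sq {τ : Mat2} (h : τ ∈ SiegelH2) (a1 a2 b1 b2 : ℤ) :
    theta (![a1, a2], ![b1, b2]) τ ^ 2 = ∑ c : Fin 2 × Fin 2,
      (-1 : ℂ) ^ (((c.1 : ℤ) + a1) * b1 + ((c.2 : ℤ) + a2) * b2) *
        (Th τ ((c.1 : ℤ) + a1, (c.2 : ℤ) + a2) * Th τ ((c.1 : ℤ), (c.2 : ℤ))) := by
  obtain ⟨h0, h1, h2, h3⟩ := siegel_facts h
  have hS := summable_ee_shift (summable_ee h1 h2 h3) (a1, a2)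
  have hS2 := siegel_two h
  set t : ℤ × ℤ → ℂ := fun n => ee τ (2 * n.1 + a1, 2 * n.2 + a2) *
      Complex.exp ((Real.pi : ℂ) * Complex.I * ((n.1 + (a1 : ℂ) / 2) * b1 + (n.2 + (a2 : ℂ) / 2) * b2)) with ht
  have hts : Summable (fun n => ‖t n‖) := by
    refine hS.congr fun n => ?_
    rw [ht, norm_mul, Complex.norm_exp]
    have : ((Real.pi : ℂ) * Complex.I * ((n.1 + (a1 : ℂ) / 2) * b1 + (n.2 + (a2 : ℂ) / 2) * b2)) =
      ((Real.pi * ((n.1 + (a1 : ℝ) / 2) * b1 + (n.2 + (a2 : ℝ) / 2) * b2) : ℝ) : ℂ) * Complex.I := by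
      push_cast; ring
    rw [this, Complex.re_ofReal_mul]
    simp
  rw [theta_eq h0, sq, tsum_mul_tsum_of_summable_norm hts hts]
  have key : ∀ c : Fin 2 × Fin 2, ∀ k l : ℤ × ℤ,
      t (cv2 (c, (k, l))).1 * t (cv2 (c, (k, l))).2 =
      (-1 : ℂ) ^ (((c.1 : ℤ) + a1) * b1 + ((c.2 : ℤ) + a2) * b2) *
      (ee ((2 : ℂ) • τ) (2 * k.1 + ((c.1 : ℤ) + a1), 2 * k.2 + ((c.2 : ℤ) + a2)) *
       ee ((2 : ℂ) • τ) (2 * l.1 + (c.1 : ℤ), 2 * l.2 + (c.2 : ℤ))) := by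
    intro c k l
    have e1 : (-1 : ℂ) ^ (((c.1 : ℤ) + a1) * b1 + ((c.2 : ℤ) + a2) * b2) =
      (-1 : ℂ) ^ ((2 * k.1 + (c.1 : ℤ) + a1) * b1 + (2 * k.2 + (c.2 : ℤ) + a2) * b2) := by
      rw [show (2 * k.1 + (c.1 : ℤ) + a1) * b1 + (2 * k.2 + (c.2 : ℤ) + a2) * b2 =
        (((c.1 : ℤ) + a1) * b1 + ((c.2 : ℤ) + a2) * b2) + 2 * (k.1 * b1 + k.2 * b2) by ring,
        zpow_add₀ (by norm_num) _ (2 * (k.1 * b1 + k.2 * b2)), zpow_mul _ 2, show (-1 : ℂ) ^ (2 : ℤ) = 1 by norm_num, one_zpow, mul_one]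
    rw [e1, ← exp_pi_int]
    simp only [ht, ee, cv2, Equiv.coe_fn_mk, ← Complex.exp_add]
    congr 1
    simp only [Matrix.smul_apply, smul_eq_mul]
    push_cast
    ring
  have hsum : Summable (fun z : (ℤ × ℤ) × (ℤ × ℤ) => t z.1 * t z.2) :=
    summable_mul_of_summable_norm hts hts
  rw [← cv2.tsum_eq]
  have hsum' : Summable (fun c => t (cv2 c).1 * t (cv2 c).2) := (cv2.summable_iff).2 hsum
  rw [Summable.tsum_prod hsum', tsum_fintype]
  refine Finset.sum_congr rfl fun c _ => ?_
  rw [Th, Th, tsum_mul_tsum_of_summable_norm (summable_ee_shift hS2 ((c.1 : ℤ) + a1, (c.2 : ℤ) + a2))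
    (summable_ee_shift hS2 ((c.1 : ℤ), (c.2 : ℤ))), ← tsum_mul_left]
  refine tsum_congr fun z => ?_
  exact key c z.1 z.2

/-- the four second order theta constants -/
noncomputable def fv (τ : Mat2) : Fin 4 → ℂ := ![Th τ (0, 0), Th τ (0, 1), Th τ (1, 0), Th τ (1, 1)]

/-- the ten quadratic forms -/
def qd {R : Type*} [CommRing R] (v : Fin 4 → R) : Fin 10 → R :=
  ![v 0 ^ 2 + v 1 ^ 2 + v 2 ^ 2 + v 3 ^ 2,
    v 0 ^ 2 - v 1 ^ 2 + v 2 ^ 2 - v 3 ^ 2,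
    v 0 ^ 2 + v 1 ^ 2 - v 2 ^ 2 - v 3 ^ 2,
    v 0 ^ 2 - v 1 ^ 2 - v 2 ^ 2 + v 3 ^ 2,
    2 * (v 0 * v 1 + v 2 * v 3),
    2 * (v 0 * v 1 - v 2 * v 3),
    2 * (v 0 * v 2 + v 1 * v 3),
    2 * (v 0 * v 2 - v 1 * v 3),
    2 * (v 0 * v 3 + v 1 * v 2),
    2 * (v 0 * v 3 - v 1 * v 2)]

lemma theta_qd {τ : Mat2} (h : τ ∈ SiegelH2) (i : Fin 10) : theta (δev i) τ ^ 2 = qd (fv τ) i := by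
  have s1 : Th τ (2, 0) = Th τ (0, 0) := Th_shift τ (0, 0) (1, 0)
  have s2 : Th τ (0, 2) = Th τ (0, 0) := Th_shift τ (0, 0) (0, 1)
  have s3 : Th τ (2, 2) = Th τ (0, 0) := Th_shift τ (0, 0) (1, 1)
  have s4 : Th τ (2, 1) = Th τ (0, 1) := Th_shift τ (0, 1) (1, 0)
  have s5 : Th τ (1, 2) = Th τ (1, 0) := Th_shift τ (1, 0) (0, 1)
  have z3 : (-1 : ℂ) ^ (3 : ℤ) = -1 := by norm_num
  have z4 : (-1 : ℂ) ^ (4 : ℤ) = 1 := by norm_num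
  have z2 : (-1 : ℂ) ^ (2 : ℤ) = 1 := by norm_num
  fin_cases i <;>
  · simp only [δev, Fin.zero_eta, Fin.mk_one, Fin.reduceFinMk, Matrix.cons_val]
    rw [theta_sq h, Fintype.sum_prod_type]
    simp [Fin.sum_univ_two, qd, fv, s1, s2, s3, s4, s5, one_add_one_eq_two, z2, z3, z4]
    ring

/-- the test period matrices -/
noncomputable def tm (α β s T : ℝ) : Mat2 :=
  !![Complex.I * ((T + α : ℝ) : ℂ), Complex.I * (s : ℂ); Complex.I * (s : ℂ), Complex.I * ((T + β : ℝ) : ℂ)]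

lemma tm_mem {α β s T : ℝ} (hα : 0 ≤ α) (hβ : 0 ≤ β) (hT : |s| + 1 ≤ T) : tm α β s T ∈ SiegelH2 := by
  have hs : s ^ 2 < (T + α) * (T + β) := by
    have h0 := abs_nonneg s
    have : s ^ 2 = |s| ^ 2 := (sq_abs s).symm
    rw [this]
    nlinarith [mul_nonneg hα hβ, mul_nonneg hα (by linarith : 0 ≤ T), mul_nonneg hβ (by linarith : 0 ≤ T)]
  have hT0 : 0 < T := by have h0 := abs_nonneg s; linarith
  constructor
  · ext i j
    fin_cases i <;> fin_cases j <;> simp [tm]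
  · have hm : (tm α β s T).map Complex.im = !![T + α, s; s, T + β] := by
      ext i j
      fin_cases i <;> fin_cases j <;> simp [tm]
    rw [hm]
    refine Matrix.PosDef.of_dotProduct_mulVec_pos ?_ ?_
    · ext i j
      fin_cases i <;> fin_cases j <;> simp
    · intro x hx
      obtain ⟨ε, hε, hb⟩ := posdef_bound (a := T + α) (b := s) (c := T + β) (by linarith) (by linarith) (by linarith)
      have h1 := hb (x 0) (x 1)
      have h2 : 0 < x 0 ^ 2 + x 1 ^ 2 := by
        by_contra hcon
        apply hx
        have a0 : x 0 = 0 := by nlinarith [sq_nonneg (x 0), sq_nonneg (x 1)]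
        have a1 : x 1 = 0 := by nlinarith [sq_nonneg (x 0), sq_nonneg (x 1)]
        ext i; fin_cases i <;> simp [a0, a1]
      have h3 := mul_pos hε h2
      simp [Matrix.mulVec, dotProduct, Fin.sum_univ_two]
      nlinarith

/-- normalized terms -/
noncomputable def gt (a : ℤ × ℤ) (α β s T : ℝ) (n : ℤ × ℤ) : ℂ :=
  Complex.exp (((-Real.pi / 2 * (4 * (n.1 * (n.1 + a.1) : ℤ) * (T + α) + 4 * (n.2 * (n.2 + a.2) : ℤ) * (T + β)
    + 2 * (2 * n.1 + a.1) * (2 * n.2 + a.2) * s) : ℝ) : ℂ))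

noncomputable def gT (a : ℤ × ℤ) (α β s T : ℝ) : ℂ := ∑' n, gt a α β s T n

lemma ee_tm (a : ℤ × ℤ) (ha1 : a.1 ^ 2 = a.1) (ha2 : a.2 ^ 2 = a.2) (α β s T : ℝ) (n : ℤ × ℤ) :
    ee ((2 : ℂ) • tm α β s T) (2 * n.1 + a.1, 2 * n.2 + a.2) =
      Complex.exp ((-Real.pi / 2 * (a.1 * (T + α) + a.2 * (T + β)) : ℝ) : ℂ) * gt a α β s T n := by
  have h1 : ((a.1 : ℂ)) ^ 2 = a.1 := by exact_mod_cast ha1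
  have h2 : ((a.2 : ℂ)) ^ 2 = a.2 := by exact_mod_cast ha2
  rw [ee, gt, ← Complex.exp_add]
  congr 1
  simp [tm]
  have hI := Complex.I_mul_I
  linear_combination ((Real.pi : ℂ) / 2 * ((2 * n.1 + a.1) ^ 2 * (T + α) + 2 * (2 * n.1 + a.1) * (2 * n.2 + a.2) * s
    + (2 * n.2 + a.2) ^ 2 * (T + β))) * hI - (Real.pi : ℂ) / 2 * (T + α) * h1 - (Real.pi : ℂ) / 2 * (T + β) * h2

lemma Th_tm (a : ℤ × ℤ) (ha1 : a.1 ^ 2 = a.1) (ha2 : a.2 ^ 2 = a.2) (α β s T : ℝ) :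
    Th (tm α β s T) a =
      Complex.exp ((-Real.pi / 2 * (a.1 * (T + α) + a.2 * (T + β)) : ℝ) : ℂ) * gT a α β s T := by
  rw [Th, gT, ← tsum_mul_left]
  exact tsum_congr fun n => ee_tm a ha1 ha2 α β s T n

lemma norm_gt_le (a : ℤ × ℤ) (h1 : ∀ n : ℤ, 0 ≤ n * (n + a.1)) (h2 : ∀ n : ℤ, 0 ≤ n * (n + a.2))
    (α β s T T0 : ℝ) (hT : T0 ≤ T) (n : ℤ × ℤ) : ‖gt a α β s T n‖ ≤ ‖gt a α β s T0 n‖ := by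
  rw [gt, gt, Complex.norm_exp, Complex.norm_exp, Complex.ofReal_re, Complex.ofReal_re]
  apply Real.exp_le_exp.2
  have e1 : (0 : ℝ) ≤ (n.1 * (n.1 + a.1) : ℤ) := by exact_mod_cast h1 n.1
  have e2 : (0 : ℝ) ≤ (n.2 * (n.2 + a.2) : ℤ) := by exact_mod_cast h2 n.2
  generalize ((n.1 * (n.1 + a.1) : ℤ) : ℝ) = u at *
  generalize ((n.2 * (n.2 + a.2) : ℤ) : ℝ) = v at *
  have hd : 0 ≤ T - T0 := by linarith
  have hp := mul_nonneg Real.pi_pos.le (mul_nonneg (add_nonneg e1 e2) hd)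
  nlinarith

lemma summable_gt (a : ℤ × ℤ) (ha1 : a.1 ^ 2 = a.1) (ha2 : a.2 ^ 2 = a.2) {α β s T : ℝ}
    (hα : 0 ≤ α) (hβ : 0 ≤ β) (hT : |s| + 1 ≤ T) : Summable (fun n => ‖gt a α β s T n‖) := by
  have := summable_ee_shift (siegel_two (tm_mem hα hβ hT)) a
  simp only [ee_tm a ha1 ha2, norm_mul] at this
  exact (summable_mul_left_iff (by simp)).1 this

/-- limit terms -/
noncomputable def gl (a : ℤ × ℤ) (s : ℝ) (n : ℤ × ℤ) : ℂ :=
  if n.1 * (n.1 + a.1) = 0 ∧ n.2 * (n.2 + a.2) = 0 then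
    Complex.exp (((-Real.pi * ((2 * n.1 + a.1) * (2 * n.2 + a.2) * s) : ℝ) : ℂ)) else 0

lemma tendsto_gt (a : ℤ × ℤ) (h1 : ∀ n : ℤ, 0 ≤ n * (n + a.1)) (h2 : ∀ n : ℤ, 0 ≤ n * (n + a.2))
    (α β s : ℝ) (n : ℤ × ℤ) :
    Filter.Tendsto (fun T => gt a α β s T n) Filter.atTop (nhds (gl a s n)) := by
  have e1 := h1 n.1
  have e2 := h2 n.2
  unfold gl gt
  split_ifs with h
  · simp only [h.1, h.2]
    refine tendsto_const_nhds.congr fun T => ?_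
    congr 2
    push_cast; ring
  · generalize (n.1 * (n.1 + a.1)) = u at *
    generalize (n.2 * (n.2 + a.2)) = v at *
    have huv : (0 : ℝ) < (u : ℝ) + v := by
      have : 0 < u + v := by omega
      exact_mod_cast this
    simp only [← Complex.ofReal_exp]
    rw [← Complex.ofReal_zero]
    refine (Complex.continuous_ofReal.tendsto 0).comp ?_
    refine Real.tendsto_exp_atBot.comp ?_
    have : Filter.Tendsto (fun T : ℝ => (-Real.pi / 2 * (4 * u * α + 4 * v * β
      + 2 * (2 * n.1 + a.1) * (2 * n.2 + a.2) * s)) + (-Real.pi * 2 * (u + v)) * T) Filter.atTop Filter.atBot := by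
      refine Filter.tendsto_atBot_add_const_left _ _ ?_
      refine Filter.Tendsto.const_mul_atTop_of_neg ?_ Filter.tendsto_id
      have := mul_pos Real.pi_pos huv
      linarith
    refine this.congr fun T => ?_
    ring

lemma tendsto_gT (a : ℤ × ℤ) (ha1 : a.1 ^ 2 = a.1) (ha2 : a.2 ^ 2 = a.2)
    (h1 : ∀ n : ℤ, 0 ≤ n * (n + a.1)) (h2 : ∀ n : ℤ, 0 ≤ n * (n + a.2))
    {α β : ℝ} (s : ℝ) (hα : 0 ≤ α) (hβ : 0 ≤ β) :
    Filter.Tendsto (fun T => gT a α β s T) Filter.atTop (nhds (∑' n, gl a s n)) := by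
  refine tendsto_tsum_of_dominated_convergence (summable_gt (s := s) a ha1 ha2 hα hβ le_rfl)
    (fun n => tendsto_gt a h1 h2 α β s n) ?_
  filter_upwards [Filter.eventually_ge_atTop (|s| + 1)] with T hT n
  exact norm_gt_le a h1 h2 α β s T _ hT n

lemma nn0 (n : ℤ) : 0 ≤ n * (n + 0) := by nlinarith [sq_nonneg n]
lemma nn1 (n : ℤ) : 0 ≤ n * (n + 1) := by
  rcases le_or_gt 0 n with h | h
  · positivity
  · exact mul_nonneg_of_nonpos_of_nonpos (by omega) (by omega)

lemma lim00 (s : ℝ) : ∑' n, gl (0, 0) s n = 1 := by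
  rw [tsum_eq_single (0, 0)]
  · simp [gl]
  · rintro ⟨x, y⟩ h
    have : ¬ (x = 0 ∧ y = 0) := by rintro ⟨rfl, rfl⟩; exact h rfl
    simp [gl, this]

lemma lim01 (s : ℝ) : ∑' n, gl (0, 1) s n = 2 := by
  rw [tsum_eq_sum (s := {(0, 0), (0, -1)})]
  · rw [Finset.sum_pair (by simp)]
    simp [gl]; norm_num
  · rintro ⟨x, y⟩ h
    have : ¬ (x = 0 ∧ (y = 0 ∨ y + 1 = 0)) := by
      rintro ⟨rfl, rfl | h'⟩
      · simp at h
      · obtain rfl : y = -1 := by omega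
        simp at h
    simp [gl, this]

lemma lim10 (s : ℝ) : ∑' n, gl (1, 0) s n = 2 := by
  rw [tsum_eq_sum (s := {(0, 0), (-1, 0)})]
  · rw [Finset.sum_pair (by simp)]
    simp [gl]; norm_num
  · rintro ⟨x, y⟩ h
    have : ¬ ((x = 0 ∨ x + 1 = 0) ∧ y = 0) := by
      rintro ⟨rfl | h', rfl⟩
      · simp at h
      · obtain rfl : x = -1 := by omega
        simp at h
    simp [gl, this]

lemma lim11 (s : ℝ) : ∑' n, gl (1, 1) s n = ((4 * Real.cosh (Real.pi * s) : ℝ) : ℂ) := by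
  rw [tsum_eq_sum (s := {(0, 0), (-1, 0), (0, -1), (-1, -1)})]
  · rw [Finset.sum_insert (by simp), Finset.sum_insert (by simp), Finset.sum_pair (by simp)]
    rw [Real.cosh_eq]
    simp [gl]
    ring_nf
  · rintro ⟨x, y⟩ h
    have : ¬ ((x = 0 ∨ x + 1 = 0) ∧ (y = 0 ∨ y + 1 = 0)) := by
      rintro ⟨rfl | hx, rfl | hy⟩
      · simp at h
      · obtain rfl : y = -1 := by omega
        simp at h
      · obtain rfl : x = -1 := by omega
        simp at h
      · obtain rfl : y = -1 := by omega
        obtain rfl : x = -1 := by omega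
        simp at h
    simp [gl, this]

/-- weights of the four second order theta constants -/
def wv : Fin 4 → ℕ := ![0, 1, 1, 2]

noncomputable def hh (α β s T : ℝ) : Fin 4 → ℂ :=
  ![gT (0, 0) α β s T, (Real.exp (-Real.pi / 2 * β) : ℂ) * gT (0, 1) α β s T,
    (Real.exp (-Real.pi / 2 * α) : ℂ) * gT (1, 0) α β s T,
    (Real.exp (-Real.pi / 2 * α) : ℂ) * (Real.exp (-Real.pi / 2 * β) : ℂ) * gT (1, 1) α β s T]

noncomputable def hl (α β s : ℝ) : Fin 4 → ℂ :=
  ![1, (Real.exp (-Real.pi / 2 * β) : ℂ) * 2,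
    (Real.exp (-Real.pi / 2 * α) : ℂ) * 2,
    (Real.exp (-Real.pi / 2 * α) : ℂ) * (Real.exp (-Real.pi / 2 * β) : ℂ) *
      ((4 * Real.cosh (Real.pi * s) : ℝ) : ℂ)]

lemma fv_tm (α β s T : ℝ) (i : Fin 4) :
    fv (tm α β s T) i = (Real.exp (-Real.pi / 2 * T) : ℂ) ^ wv i * hh α β s T i := by
  fin_cases i
  · simp [fv, wv, hh, Th_tm]
  · simp [fv, wv, hh, Th_tm, mul_add, Complex.exp_add, mul_assoc]
  · simp [fv, wv, hh, Th_tm, mul_add, Complex.exp_add, mul_assoc]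
  · simp [fv, wv, hh, Th_tm, mul_add, Complex.exp_add]
    ring

lemma tendsto_hh {α β : ℝ} (s : ℝ) (hα : 0 ≤ α) (hβ : 0 ≤ β) (i : Fin 4) :
    Filter.Tendsto (fun T => hh α β s T i) Filter.atTop (nhds (hl α β s i)) := by
  have t00 := tendsto_gT (0, 0) (by norm_num) (by norm_num) nn0 nn0 s hα hβ
  have t01 := tendsto_gT (0, 1) (by norm_num) (by norm_num) nn0 nn1 s hα hβ
  have t10 := tendsto_gT (1, 0) (by norm_num) (by norm_num) nn1 nn0 s hα hβ
  have t11 := tendsto_gT (1, 1) (by norm_num) (by norm_num) nn1 nn1 s hα hβ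
  rw [lim00] at t00
  rw [lim01] at t01
  rw [lim10] at t10
  rw [lim11] at t11
  fin_cases i
  · exact t00
  · exact t01.const_mul _
  · exact t10.const_mul _
  · exact t11.const_mul _

/-- total weight of a monomial -/
def wt (m : Fin 4 →₀ ℕ) : ℕ := ∑ i, wv i * m i

lemma tendsto_tpow (n : ℕ) :
    Filter.Tendsto (fun T : ℝ => (Real.exp (-Real.pi / 2 * T) : ℂ) ^ n) Filter.atTop
      (nhds (if n = 0 then 1 else 0)) := by
  have h : Filter.Tendsto (fun T : ℝ => (Real.exp (-Real.pi / 2 * T) : ℂ)) Filter.atTop (nhds 0) := by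
    rw [← Complex.ofReal_zero]
    refine (Complex.continuous_ofReal.tendsto 0).comp ?_
    refine Real.tendsto_exp_atBot.comp ?_
    refine Filter.Tendsto.const_mul_atTop_of_neg ?_ Filter.tendsto_id
    linarith [Real.pi_pos]
  split_ifs with hn
  · simp [hn]
  · simpa [hn] using h.pow n

open MvPolynomial in
lemma leading_zero {P : MvPolynomial (Fin 4) ℂ}
    (h0 : ∀ τ ∈ SiegelH2, eval (fv τ) P = 0) {k : ℕ} (hk : ∀ m ∈ P.support, k ≤ wt m)
    {α β : ℝ} (s : ℝ) (hα : 0 ≤ α) (hβ : 0 ≤ β) :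
    ∑ m ∈ P.support with wt m = k, coeff m P * ∏ i, hl α β s i ^ m i = 0 := by
  have hz : ∀ T, |s| + 1 ≤ T → ∑ m ∈ P.support, (Real.exp (-Real.pi / 2 * T) : ℂ) ^ (wt m - k) *
      (coeff m P * ∏ i, hh α β s T i ^ m i) = 0 := by
    intro T hT
    have h1 := h0 _ (tm_mem hα hβ hT)
    rw [eval_eq'] at h1
    have hne : (Real.exp (-Real.pi / 2 * T) : ℂ) ^ k ≠ 0 := by
      apply pow_ne_zero; exact_mod_cast (Real.exp_pos _).ne'
    apply mul_left_cancel₀ hne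
    rw [mul_zero, ← h1, Finset.mul_sum]
    refine Finset.sum_congr rfl fun m hm => ?_
    simp only [fv_tm, mul_pow, Finset.prod_mul_distrib, ← pow_mul]
    rw [Finset.prod_pow_eq_pow_sum, ← mul_assoc, ← pow_add, Nat.add_sub_of_le (hk m hm), wt]
    ring
  have ht : Filter.Tendsto (fun T : ℝ => ∑ m ∈ P.support, (Real.exp (-Real.pi / 2 * T) : ℂ) ^ (wt m - k) *
      (coeff m P * ∏ i, hh α β s T i ^ m i)) Filter.atTop
      (nhds (∑ m ∈ P.support, (if wt m - k = 0 then 1 else 0) * (coeff m P * ∏ i, hl α β s i ^ m i))) := by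
    refine tendsto_finsetSum _ fun m _ => (tendsto_tpow _).mul ?_
    refine Filter.Tendsto.const_mul _ ?_
    exact tendsto_finsetProd _ fun i _ => (tendsto_hh s hα hβ i).pow _
  have h2 : Filter.Tendsto (fun T : ℝ => ∑ m ∈ P.support, (Real.exp (-Real.pi / 2 * T) : ℂ) ^ (wt m - k) *
      (coeff m P * ∏ i, hh α β s T i ^ m i)) Filter.atTop (nhds 0) := by
    refine tendsto_const_nhds.congr' ?_
    filter_upwards [Filter.eventually_ge_atTop (|s| + 1)] with T hT
    exact (hz T hT).symm
  have h3 := tendsto_nhds_unique ht h2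
  rw [Finset.sum_filter]
  refine Eq.trans (Finset.sum_congr rfl fun m hm => ?_) h3
  have := hk m hm
  by_cases hw : wt m = k
  · simp [hw]
  · have : wt m - k ≠ 0 := by omega
    simp [hw, this]

/-- the box of test points -/
def bx : Fin 4 → Set ℂ := fun i =>
  (fun r : ℝ => (r : ℂ)) '' (![Set.Ioo 1 2, Set.Ioo 0 1, Set.Ioo 0 1, Set.Ioi 4] i : Set ℝ)

lemma bx_inf (i : Fin 4) : (bx i).Infinite := by
  refine Set.Infinite.image (Complex.ofReal_injective.injOn) ?_
  fin_cases i
  · exact Set.Ioo_infinite (by norm_num)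
  · exact Set.Ioo_infinite (by norm_num)
  · exact Set.Ioo_infinite (by norm_num)
  · exact Set.Ioi_infinite 4

lemma exists_log {x : ℝ} (h0 : 0 < x) (h1 : x < 1) : ∃ α : ℝ, 0 ≤ α ∧ Real.exp (-Real.pi / 2 * α) = x := by
  refine ⟨-(2 / Real.pi) * Real.log x, ?_, ?_⟩
  · have := Real.log_neg h0 h1
    have h2 : 0 < 2 / Real.pi := by positivity
    nlinarith
  · rw [show -Real.pi / 2 * (-(2 / Real.pi) * Real.log x) = Real.log x by
      field_simp [Real.pi_pos.ne'], Real.exp_log h0]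

lemma bx_param {x : Fin 4 → ℂ} (hx : x ∈ Set.pi Set.univ bx) :
    ∃ α β s : ℝ, 0 ≤ α ∧ 0 ≤ β ∧ ∀ i, x i = x 0 * hl α β s i := by
  obtain ⟨x0, ⟨h0, h0'⟩, e0⟩ := hx 0 trivial
  obtain ⟨x1, ⟨h1, h1'⟩, e1⟩ := hx 1 trivial
  obtain ⟨x2, ⟨h2, h2'⟩, e2⟩ := hx 2 trivial
  obtain ⟨x3, h3, e3⟩ := hx 3 trivial
  have h3 : 4 < x3 := h3
  have p0 : 0 < x0 := by linarith
  obtain ⟨α, hα, eα⟩ := exists_log (x := x2 / (2 * x0)) (by positivity) (by rw [div_lt_one (by positivity)]; linarith)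
  obtain ⟨β, hβ, eβ⟩ := exists_log (x := x1 / (2 * x0)) (by positivity) (by rw [div_lt_one (by positivity)]; linarith)
  have hc : 1 ≤ x3 * x0 / (x1 * x2) := by
    rw [le_div_iff₀ (by positivity)]
    nlinarith
  refine ⟨α, β, Real.arcosh (x3 * x0 / (x1 * x2)) / Real.pi, hα, hβ, fun i => ?_⟩
  have hpi : Real.pi * (Real.arcosh (x3 * x0 / (x1 * x2)) / Real.pi) = Real.arcosh (x3 * x0 / (x1 * x2)) := by
    field_simp
  have c0 : (x0 : ℂ) ≠ 0 := by exact_mod_cast p0.ne'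
  have c1 : (x1 : ℂ) ≠ 0 := by exact_mod_cast h1.ne'
  have c2 : (x2 : ℂ) ≠ 0 := by exact_mod_cast h2.ne'
  fin_cases i
  · simp [hl]
  · change x 1 = x 0 * ((Real.exp (-Real.pi / 2 * β) : ℂ) * 2)
    rw [← e0, ← e1, eβ]
    push_cast; field_simp
  · change x 2 = x 0 * ((Real.exp (-Real.pi / 2 * α) : ℂ) * 2)
    rw [← e0, ← e2, eα]
    push_cast; field_simp
  · change x 3 = x 0 * ((Real.exp (-Real.pi / 2 * α) : ℂ) * (Real.exp (-Real.pi / 2 * β) : ℂ) *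
      ((4 * Real.cosh (Real.pi * (Real.arcosh (x3 * x0 / (x1 * x2)) / Real.pi)) : ℝ) : ℂ))
    rw [hpi, Real.cosh_arcosh hc, ← e0, ← e3, eα, eβ]
    push_cast; field_simp; norm_num

open MvPolynomial in
/-- no homogeneous relations between the four second order theta constants -/
lemma alg_indep {d : ℕ} {P : MvPolynomial (Fin 4) ℂ} (hP : P.IsHomogeneous d)
    (h0 : ∀ τ ∈ SiegelH2, eval (fv τ) P = 0) : P = 0 := by
  by_contra hne
  obtain ⟨m0, hm0, hmin⟩ := Finset.exists_min_image P.support wt (support_nonempty.2 hne)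
  obtain ⟨Q, hQ⟩ : ∃ Q : MvPolynomial (Fin 4) ℂ,
      Q = ∑ m ∈ P.support with wt m = wt m0, monomial m (coeff m P) := ⟨_, rfl⟩
  have hQ0 : Q = 0 := by
    refine funext_set bx bx_inf fun x hx => ?_
    obtain ⟨α, β, s, hα, hβ, hx⟩ := bx_param hx
    have hl0 := leading_zero h0 hmin s hα hβ
    rw [hQ, map_sum, map_zero]
    have : ∀ m ∈ P.support.filter (fun m => wt m = wt m0), eval x (monomial m (coeff m P)) =
        x 0 ^ d * (coeff m P * ∏ i, hl α β s i ^ m i) := by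
      intro m hm
      have hd : ∑ i, m i = d := by
        have := hP (mem_support_iff.1 (Finset.mem_filter.1 hm).1)
        rw [← this, Finsupp.weight_apply, Finsupp.sum_fintype] <;> simp
      rw [eval_monomial, Finsupp.prod_fintype _ _ (by simp), ← hd, ← Finset.prod_pow_eq_pow_sum,
        mul_left_comm, ← Finset.prod_mul_distrib]
      congr 1
      refine Finset.prod_congr rfl fun i _ => ?_
      conv_lhs => rw [hx i]
      rw [mul_pow]
    rw [Finset.sum_congr rfl this, ← Finset.mul_sum, hl0, mul_zero]
  have hc : coeff m0 Q = coeff m0 P := by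
    rw [hQ, coeff_sum, Finset.sum_eq_single m0]
    · rw [coeff_monomial, if_pos rfl]
    · intro m _ hm
      rw [coeff_monomial, if_neg hm]
    · intro h
      rw [Finset.mem_filter] at h
      exact absurd (And.intro hm0 (Eq.refl (wt m0))) h
  rw [hQ0, coeff_zero] at hc
  exact mem_support_iff.1 hm0 hc.symm

/-- first indices of the basis -/
def bI : Fin 34 → Fin 10 :=
  ![0, 0, 0, 0, 0, 1, 1, 1, 1, 1, 2, 2, 2, 2, 2, 3, 3, 3, 3, 3, 4, 4, 4, 4, 4, 0, 0, 0, 0, 0, 1, 1, 1, 2]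

/-- second indices of the basis -/
def bJ : Fin 34 → Fin 10 :=
  ![0, 1, 2, 3, 4, 0, 1, 2, 3, 4, 0, 1, 2, 3, 4, 0, 1, 2, 3, 4, 0, 1, 2, 3, 4, 5, 6, 7, 8, 9, 5, 6, 7, 5]

/-- interpolation points -/
def ptL : List (Fin 4 → ℤ) :=
  [![0, 0, 0, 1],
   ![0, 0, 1, 1],
   ![0, 1, 0, 1],
   ![0, 1, 1, 0],
   ![0, 0, 1, 2],
   ![0, 1, 0, 2],
   ![0, 1, 1, 1],
   ![0, 1, 2, 0],
   ![0, 0, 1, 3],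
   ![0, 1, 0, 3],
   ![0, 1, 1, 2],
   ![0, 1, 2, 1],
   ![0, 1, 3, 0],
   ![0, 2, 1, 1],
   ![1, 1, 1, 1],
   ![1, 1, 1, -1],
   ![0, 1, 1, 3],
   ![0, 1, 2, 2],
   ![0, 1, 3, 1],
   ![0, 2, 1, 2],
   ![0, 2, 2, 1],
   ![1, 1, 1, 2],
   ![0, 1, 2, 3],
   ![1, 1, 1, 3],
   ![1, 1, 2, 2],
   ![1, -1, 2, 2],
   ![1, 2, 1, 2],
   ![1, 2, -1, 2],
   ![1, 2, 2, 1],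
   ![1, 1, 2, 3],
   ![1, 2, 1, 3],
   ![1, 2, 2, 2],
   ![1, 1, 3, 3],
   ![1, 2, 2, 3]]

/-- inverse of the interpolation matrix modulo 31 -/
def LvL : List (List ℕ) :=
  [[18, 17, 17, 12, 17, 17, 10, 7, 2, 2, 3, 7, 14, 7, 2, 20, 15, 26, 0, 26, 15, 17, 0, 5, 29, 17, 29, 17, 30, 26, 26, 3, 0, 28],
   [7, 1, 18, 9, 25, 15, 11, 24, 28, 26, 16, 28, 11, 2, 26, 17, 20, 18, 11, 16, 6, 14, 0, 10, 21, 24, 28, 9, 19, 1, 28, 28, 24, 12],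
   [13, 9, 23, 18, 23, 2, 1, 23, 20, 22, 18, 22, 3, 17, 4, 28, 4, 18, 20, 20, 9, 10, 0, 24, 18, 2, 11, 17, 12, 22, 26, 22, 7, 28],
   [12, 29, 29, 17, 22, 22, 9, 2, 27, 27, 15, 26, 18, 26, 10, 0, 23, 17, 0, 17, 18, 1, 0, 12, 25, 19, 25, 19, 1, 13, 13, 12, 0, 25],
   [8, 21, 14, 14, 24, 19, 18, 19, 2, 21, 15, 15, 21, 2, 24, 19, 16, 22, 16, 8, 8, 19, 0, 6, 25, 2, 9, 0, 9, 2, 0, 6, 16, 0],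
   [26, 22, 9, 22, 27, 24, 21, 26, 18, 30, 25, 28, 22, 14, 19, 27, 24, 29, 13, 17, 17, 30, 0, 13, 5, 17, 12, 24, 1, 5, 5, 3, 0, 3],
   [17, 0, 6, 28, 17, 27, 5, 29, 10, 2, 19, 20, 11, 9, 12, 26, 3, 12, 28, 18, 16, 1, 0, 3, 7, 4, 10, 29, 12, 30, 3, 28, 7, 19],
   [14, 9, 15, 14, 30, 13, 24, 6, 0, 26, 13, 2, 18, 30, 10, 17, 8, 20, 17, 0, 15, 21, 24, 7, 13, 29, 13, 7, 19, 9, 5, 9, 24, 3],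
   [21, 24, 6, 22, 11, 8, 13, 24, 11, 0, 17, 2, 19, 21, 4, 14, 27, 30, 15, 9, 12, 30, 7, 19, 6, 12, 30, 5, 30, 18, 18, 19, 0, 6],
   [28, 1, 1, 1, 0, 0, 21, 1, 23, 23, 8, 19, 19, 19, 28, 20, 7, 6, 0, 6, 18, 29, 0, 10, 17, 14, 17, 14, 21, 26, 26, 30, 0, 28],
   [2, 24, 6, 1, 4, 7, 8, 28, 25, 13, 21, 25, 25, 8, 27, 19, 2, 13, 18, 25, 14, 1, 0, 18, 5, 24, 29, 17, 30, 26, 26, 28, 0, 28],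
   [0, 30, 11, 22, 6, 17, 8, 3, 20, 12, 12, 18, 29, 27, 19, 18, 16, 9, 28, 30, 28, 7, 7, 6, 17, 20, 28, 9, 19, 1, 28, 6, 24, 12],
   [8, 23, 30, 25, 9, 5, 25, 26, 1, 22, 18, 22, 3, 27, 21, 1, 4, 21, 20, 14, 3, 2, 0, 15, 25, 9, 11, 17, 12, 22, 26, 19, 7, 28],
   [30, 15, 2, 1, 29, 1, 4, 4, 22, 2, 8, 25, 23, 6, 1, 22, 29, 17, 16, 7, 0, 1, 24, 12, 18, 12, 25, 19, 1, 13, 13, 12, 0, 25],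
   [11, 20, 5, 0, 28, 4, 8, 25, 28, 2, 0, 4, 14, 16, 13, 14, 27, 24, 12, 9, 29, 9, 0, 19, 21, 6, 11, 17, 12, 22, 26, 10, 23, 28],
   [30, 23, 23, 20, 9, 9, 21, 27, 23, 23, 21, 10, 7, 10, 22, 22, 21, 6, 0, 6, 28, 6, 0, 17, 23, 4, 23, 4, 1, 5, 5, 25, 0, 3],
   [19, 29, 27, 1, 26, 23, 24, 18, 2, 4, 6, 29, 9, 15, 0, 9, 23, 19, 5, 2, 8, 17, 24, 21, 17, 14, 10, 29, 12, 30, 3, 3, 7, 19],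
   [7, 27, 29, 9, 30, 2, 3, 29, 5, 3, 2, 5, 18, 19, 22, 29, 5, 9, 26, 26, 2, 21, 7, 7, 20, 5, 27, 21, 19, 9, 5, 9, 24, 3],
   [25, 28, 28, 27, 25, 25, 30, 3, 3, 3, 3, 10, 18, 10, 18, 10, 24, 15, 0, 15, 26, 7, 0, 28, 30, 5, 30, 5, 30, 18, 18, 22, 0, 6],
   [13, 16, 16, 11, 23, 23, 28, 12, 22, 22, 20, 13, 7, 13, 4, 12, 8, 12, 0, 12, 20, 24, 0, 27, 3, 3, 3, 3, 0, 0, 0, 9, 0, 0],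
   [0, 5, 5, 15, 22, 22, 11, 11, 9, 9, 25, 17, 16, 17, 19, 27, 1, 16, 0, 16, 7, 5, 0, 30, 4, 28, 4, 28, 2, 10, 10, 28, 0, 6],
   [11, 17, 30, 11, 20, 26, 10, 13, 16, 29, 7, 24, 18, 18, 19, 29, 6, 30, 17, 29, 7, 10, 0, 15, 14, 8, 3, 10, 24, 29, 6, 28, 14, 7],
   [19, 18, 5, 15, 6, 0, 12, 20, 27, 14, 18, 10, 21, 16, 25, 16, 15, 1, 14, 2, 24, 4, 0, 10, 29, 30, 9, 28, 7, 18, 10, 27, 17, 6],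
   [10, 16, 16, 15, 18, 18, 6, 22, 5, 5, 0, 30, 2, 30, 7, 4, 9, 26, 0, 26, 4, 22, 0, 3, 15, 27, 15, 27, 29, 5, 5, 16, 0, 12],
   [14, 5, 5, 5, 14, 14, 15, 14, 7, 7, 24, 24, 7, 24, 0, 26, 0, 26, 0, 26, 26, 16, 0, 18, 0, 0, 0, 0, 0, 0, 0, 6, 0, 0],
   [8, 17, 13, 13, 17, 8, 10, 8, 4, 3, 0, 0, 3, 17, 12, 17, 13, 9, 13, 23, 23, 12, 0, 25, 23, 15, 22, 0, 22, 29, 0, 25, 15, 0],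
   [3, 29, 5, 20, 3, 8, 14, 28, 23, 4, 26, 14, 26, 27, 5, 17, 23, 22, 15, 5, 1, 3, 0, 15, 15, 12, 0, 14, 28, 13, 15, 18, 15, 25],
   [16, 17, 21, 0, 21, 30, 13, 7, 6, 7, 8, 0, 18, 14, 27, 7, 0, 10, 18, 27, 23, 4, 0, 20, 13, 16, 14, 0, 3, 18, 16, 4, 16, 6],
   [19, 16, 16, 27, 13, 13, 25, 14, 19, 19, 0, 16, 9, 16, 20, 15, 7, 12, 0, 12, 5, 2, 0, 19, 20, 3, 20, 3, 24, 11, 11, 1, 0, 3],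
   [20, 11, 11, 6, 7, 7, 29, 9, 19, 19, 20, 24, 27, 24, 21, 26, 3, 17, 0, 17, 1, 29, 0, 12, 28, 14, 28, 14, 7, 20, 20, 30, 0, 28],
   [13, 29, 29, 3, 14, 14, 3, 24, 18, 18, 20, 16, 6, 16, 22, 30, 16, 19, 0, 19, 30, 2, 0, 21, 11, 14, 11, 14, 10, 5, 5, 1, 0, 3],
   [25, 2, 17, 22, 17, 10, 15, 20, 17, 12, 5, 1, 0, 20, 6, 30, 4, 25, 19, 9, 20, 12, 0, 16, 19, 25, 29, 14, 28, 9, 5, 14, 8, 3],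
   [12, 5, 16, 11, 28, 24, 4, 14, 20, 10, 22, 26, 22, 0, 27, 11, 4, 13, 20, 6, 26, 12, 0, 11, 15, 9, 2, 17, 3, 22, 26, 26, 23, 28],
   [23, 12, 1, 6, 22, 26, 6, 5, 30, 9, 13, 9, 28, 4, 8, 30, 27, 10, 11, 17, 28, 29, 0, 16, 7, 22, 20, 14, 19, 9, 5, 12, 8, 3]]

/-- values of the quadratic forms modulo 31 -/
def QL : List (List ℕ) :=
  [[1, 30, 30, 1, 0, 0, 0, 0, 0, 0],
   [2, 0, 29, 0, 2, 29, 0, 0, 0, 0],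
   [2, 29, 0, 0, 0, 0, 2, 29, 0, 0],
   [2, 0, 0, 29, 0, 0, 0, 0, 2, 29],
   [5, 28, 26, 3, 4, 27, 0, 0, 0, 0],
   [5, 26, 28, 3, 0, 0, 4, 27, 0, 0],
   [3, 30, 30, 30, 2, 29, 2, 29, 2, 29],
   [5, 3, 28, 26, 0, 0, 0, 0, 4, 27],
   [10, 23, 21, 8, 6, 25, 0, 0, 0, 0],
   [10, 21, 23, 8, 0, 0, 6, 25, 0, 0],
   [6, 27, 27, 2, 4, 27, 4, 27, 2, 29],
   [6, 2, 27, 27, 4, 27, 2, 29, 4, 27],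
   [10, 8, 23, 21, 0, 0, 0, 0, 6, 25],
   [6, 27, 2, 27, 2, 29, 4, 27, 4, 27],
   [4, 0, 0, 0, 4, 0, 4, 0, 4, 0],
   [4, 0, 0, 0, 0, 4, 0, 4, 0, 27],
   [11, 22, 22, 7, 6, 25, 6, 25, 2, 29],
   [9, 30, 24, 30, 8, 23, 4, 27, 4, 27],
   [11, 7, 22, 22, 6, 25, 2, 29, 6, 25],
   [9, 24, 30, 30, 4, 27, 8, 23, 4, 27],
   [9, 30, 30, 24, 4, 27, 4, 27, 8, 23],
   [7, 28, 28, 3, 6, 29, 6, 29, 6, 2],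
   [14, 25, 19, 4, 12, 19, 6, 25, 4, 27],
   [12, 23, 23, 8, 8, 27, 8, 27, 8, 4],
   [10, 0, 25, 0, 10, 25, 8, 0, 8, 0],
   [10, 0, 25, 0, 6, 21, 0, 8, 0, 8],
   [10, 25, 0, 0, 8, 0, 10, 25, 8, 0],
   [10, 25, 0, 0, 0, 8, 6, 21, 0, 8],
   [10, 0, 0, 25, 8, 0, 8, 0, 10, 25],
   [15, 26, 20, 5, 14, 21, 10, 29, 10, 2],
   [15, 20, 26, 5, 10, 29, 14, 21, 10, 2],
   [13, 28, 28, 28, 12, 27, 12, 27, 12, 27],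
   [20, 0, 15, 0, 20, 15, 12, 0, 12, 0],
   [18, 23, 23, 2, 16, 23, 16, 23, 14, 29]]

/-- columns of the interpolation matrix modulo 31 -/
def MtL : List (List ℕ) :=
  [[1, 2, 2, 2, 1, 1, 16, 1, 2, 2, 1, 1, 2, 1, 4, 4, 4, 8, 4, 8, 8, 4, 8, 2, 2, 2, 2, 2, 2, 16, 16, 16, 4, 16],
   [1, 0, 2, 0, 10, 1, 9, 10, 28, 2, 9, 18, 28, 9, 0, 0, 2, 19, 20, 18, 19, 1, 2, 18, 0, 0, 20, 20, 0, 9, 10, 18, 0, 25],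
   [1, 2, 0, 0, 1, 10, 9, 10, 2, 28, 9, 9, 28, 18, 0, 0, 2, 18, 2, 19, 19, 1, 1, 18, 20, 20, 0, 0, 0, 10, 9, 18, 25, 25],
   [1, 0, 0, 2, 10, 10, 9, 1, 28, 28, 18, 9, 2, 9, 0, 0, 20, 19, 2, 19, 18, 1, 18, 18, 0, 0, 0, 0, 20, 9, 9, 18, 0, 7],
   [0, 2, 0, 0, 14, 0, 20, 0, 20, 0, 9, 9, 0, 18, 4, 0, 18, 14, 18, 28, 28, 16, 1, 18, 2, 20, 28, 0, 28, 25, 20, 20, 4, 28],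
   [1, 0, 2, 0, 14, 1, 19, 14, 5, 2, 28, 7, 5, 28, 0, 0, 16, 20, 7, 19, 20, 2, 4, 25, 0, 0, 28, 28, 0, 19, 25, 28, 0, 20],
   [1, 0, 2, 0, 16, 1, 1, 16, 8, 2, 4, 2, 8, 4, 0, 0, 8, 1, 4, 4, 1, 16, 1, 8, 0, 0, 1, 1, 0, 1, 4, 16, 0, 8],
   [1, 0, 0, 0, 14, 10, 1, 16, 5, 28, 4, 1, 8, 8, 0, 0, 8, 14, 19, 18, 1, 16, 16, 8, 0, 0, 0, 0, 0, 8, 16, 16, 0, 8],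
   [1, 0, 0, 0, 16, 10, 1, 14, 8, 28, 8, 1, 5, 4, 0, 0, 18, 1, 19, 18, 14, 16, 9, 8, 0, 0, 0, 0, 0, 1, 16, 16, 0, 1],
   [0, 0, 0, 0, 10, 0, 16, 0, 19, 0, 4, 1, 0, 8, 0, 0, 10, 4, 16, 20, 8, 8, 16, 8, 0, 0, 20, 0, 0, 20, 8, 4, 0, 4],
   [1, 2, 0, 0, 1, 14, 19, 14, 2, 5, 28, 28, 5, 7, 0, 0, 16, 19, 16, 20, 20, 2, 16, 25, 28, 28, 0, 0, 0, 25, 19, 28, 10, 20],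
   [1, 0, 0, 0, 10, 14, 1, 16, 28, 5, 4, 8, 8, 1, 0, 0, 8, 18, 18, 14, 1, 16, 4, 8, 0, 0, 0, 0, 0, 16, 8, 16, 0, 8],
   [1, 2, 0, 0, 1, 16, 1, 16, 2, 8, 4, 4, 8, 2, 0, 0, 8, 4, 8, 1, 1, 16, 2, 8, 1, 1, 0, 0, 0, 4, 1, 16, 16, 8],
   [1, 0, 0, 0, 10, 16, 1, 14, 28, 8, 8, 4, 5, 1, 0, 0, 18, 18, 8, 1, 14, 16, 5, 8, 0, 0, 0, 0, 0, 16, 1, 16, 0, 1],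
   [0, 2, 0, 0, 14, 0, 16, 0, 20, 0, 4, 4, 0, 2, 0, 0, 10, 10, 10, 8, 8, 8, 2, 8, 28, 1, 0, 0, 0, 10, 16, 4, 10, 4],
   [1, 0, 0, 2, 14, 14, 19, 1, 5, 5, 7, 28, 2, 28, 0, 0, 7, 20, 16, 20, 19, 2, 19, 25, 0, 0, 0, 0, 28, 19, 19, 28, 0, 9],
   [1, 0, 0, 0, 16, 14, 1, 10, 8, 5, 1, 8, 28, 4, 0, 0, 19, 1, 18, 14, 18, 16, 28, 8, 0, 0, 0, 0, 0, 1, 8, 16, 0, 16],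
   [1, 0, 0, 0, 14, 16, 1, 10, 5, 8, 1, 4, 28, 8, 0, 0, 19, 14, 8, 1, 18, 16, 14, 8, 0, 0, 0, 0, 0, 8, 1, 16, 0, 16],
   [1, 0, 0, 2, 16, 16, 1, 1, 8, 8, 2, 4, 2, 4, 0, 0, 4, 1, 8, 1, 4, 16, 4, 8, 0, 0, 0, 0, 1, 1, 1, 16, 0, 2],
   [0, 0, 0, 0, 10, 0, 16, 0, 19, 0, 1, 4, 0, 8, 0, 0, 16, 4, 10, 8, 20, 8, 14, 8, 0, 0, 0, 0, 20, 20, 16, 4, 0, 8],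
   [0, 2, 0, 0, 18, 0, 14, 0, 28, 0, 28, 28, 0, 7, 4, 0, 14, 9, 14, 10, 10, 8, 16, 25, 2, 28, 5, 0, 5, 20, 14, 14, 4, 18],
   [0, 0, 0, 0, 25, 0, 4, 0, 20, 0, 4, 8, 0, 1, 0, 0, 7, 2, 8, 7, 16, 2, 4, 8, 0, 0, 19, 0, 0, 19, 1, 8, 0, 1],
   [0, 2, 0, 0, 18, 0, 4, 0, 28, 0, 4, 4, 0, 2, 0, 0, 7, 28, 7, 16, 16, 2, 2, 8, 20, 1, 0, 0, 0, 28, 4, 8, 25, 1],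
   [0, 0, 0, 0, 25, 0, 4, 0, 20, 0, 8, 4, 0, 1, 0, 0, 8, 2, 7, 16, 7, 2, 5, 8, 0, 0, 0, 0, 19, 19, 4, 8, 0, 4],
   [0, 2, 0, 0, 4, 0, 2, 0, 1, 0, 4, 4, 0, 2, 4, 0, 1, 8, 1, 4, 4, 1, 2, 8, 2, 1, 8, 0, 8, 8, 2, 2, 4, 16],
   [0, 2, 0, 0, 14, 0, 20, 0, 20, 0, 9, 9, 0, 18, 0, 4, 18, 14, 18, 28, 28, 9, 1, 5, 20, 2, 0, 28, 0, 20, 4, 19, 25, 25],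
   [0, 0, 2, 0, 0, 14, 20, 0, 0, 20, 9, 18, 0, 9, 4, 0, 18, 28, 14, 14, 28, 16, 2, 18, 28, 0, 2, 20, 28, 20, 25, 20, 9, 28],
   [0, 0, 2, 0, 0, 14, 20, 0, 0, 20, 9, 18, 0, 9, 0, 4, 18, 28, 14, 14, 28, 9, 2, 5, 0, 28, 20, 2, 0, 4, 20, 19, 0, 25],
   [0, 0, 0, 2, 0, 0, 20, 14, 0, 0, 18, 9, 20, 9, 4, 0, 14, 28, 18, 28, 14, 16, 18, 18, 28, 0, 28, 0, 2, 20, 20, 20, 9, 5],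
   [0, 0, 0, 2, 0, 0, 20, 14, 0, 0, 18, 9, 20, 9, 0, 4, 14, 28, 18, 28, 14, 9, 18, 5, 0, 28, 0, 28, 20, 4, 4, 19, 0, 7],
   [0, 0, 0, 0, 10, 0, 16, 0, 19, 0, 4, 1, 0, 8, 0, 0, 10, 4, 16, 20, 8, 20, 16, 16, 0, 0, 0, 20, 0, 16, 14, 10, 0, 8],
   [0, 0, 2, 0, 0, 14, 16, 0, 0, 20, 4, 2, 0, 4, 0, 0, 10, 8, 9, 10, 8, 8, 1, 8, 0, 0, 28, 1, 0, 16, 10, 4, 0, 4],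
   [0, 0, 2, 0, 0, 14, 16, 0, 0, 20, 4, 2, 0, 4, 0, 0, 10, 8, 9, 10, 8, 20, 1, 16, 0, 0, 1, 28, 0, 28, 8, 10, 0, 8],
   [0, 2, 0, 0, 14, 0, 16, 0, 20, 0, 4, 4, 0, 2, 0, 0, 10, 10, 10, 8, 8, 20, 2, 16, 1, 28, 0, 0, 0, 8, 28, 10, 16, 8]]

set_option linter.unusedSimpArgs false in
set_option maxHeartbeats 2000000 in
/-- all hundred products lie in the span of the 34 chosen ones -/
lemma mem_all {A : Type*} [CommRing A] [Algebra ℂ A] (T : Fin 10 → A) (S : Submodule ℂ A)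
    (h5 : T 5 = T 0 - T 1 + T 2 - T 3 - T 4) (h6 : T 6 = T 1 - T 2 + T 4)
    (h7 : T 7 = T 0 - T 3 - T 4) (h8 : T 8 = T 3 + T 4 - T 2) (h9 : T 9 = T 0 - T 1 - T 4)
    (hb : ∀ x, T (bI x) * T (bJ x) ^ 2 ∈ S) (i j : Fin 10) : T i * T j ^ 2 ∈ S := by
  have b00 : T 0 * T 0 ^ 2 ∈ S := hb 0
  have b01 : T 0 * T 1 ^ 2 ∈ S := hb 1
  have b02 : T 0 * T 2 ^ 2 ∈ S := hb 2
  have b03 : T 0 * T 3 ^ 2 ∈ S := hb 3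
  have b04 : T 0 * T 4 ^ 2 ∈ S := hb 4
  have b10 : T 1 * T 0 ^ 2 ∈ S := hb 5
  have b11 : T 1 * T 1 ^ 2 ∈ S := hb 6
  have b12 : T 1 * T 2 ^ 2 ∈ S := hb 7
  have b13 : T 1 * T 3 ^ 2 ∈ S := hb 8
  have b14 : T 1 * T 4 ^ 2 ∈ S := hb 9
  have b20 : T 2 * T 0 ^ 2 ∈ S := hb 10
  have b21 : T 2 * T 1 ^ 2 ∈ S := hb 11
  have b22 : T 2 * T 2 ^ 2 ∈ S := hb 12
  have b23 : T 2 * T 3 ^ 2 ∈ S := hb 13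
  have b24 : T 2 * T 4 ^ 2 ∈ S := hb 14
  have b30 : T 3 * T 0 ^ 2 ∈ S := hb 15
  have b31 : T 3 * T 1 ^ 2 ∈ S := hb 16
  have b32 : T 3 * T 2 ^ 2 ∈ S := hb 17
  have b33 : T 3 * T 3 ^ 2 ∈ S := hb 18
  have b34 : T 3 * T 4 ^ 2 ∈ S := hb 19
  have b40 : T 4 * T 0 ^ 2 ∈ S := hb 20
  have b41 : T 4 * T 1 ^ 2 ∈ S := hb 21
  have b42 : T 4 * T 2 ^ 2 ∈ S := hb 22
  have b43 : T 4 * T 3 ^ 2 ∈ S := hb 23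
  have b44 : T 4 * T 4 ^ 2 ∈ S := hb 24
  have b05 : T 0 * T 5 ^ 2 ∈ S := hb 25
  have b06 : T 0 * T 6 ^ 2 ∈ S := hb 26
  have b07 : T 0 * T 7 ^ 2 ∈ S := hb 27
  have b08 : T 0 * T 8 ^ 2 ∈ S := hb 28
  have b09 : T 0 * T 9 ^ 2 ∈ S := hb 29
  have b15 : T 1 * T 5 ^ 2 ∈ S := hb 30
  have b16 : T 1 * T 6 ^ 2 ∈ S := hb 31
  have b17 : T 1 * T 7 ^ 2 ∈ S := hb 32
  have b25 : T 2 * T 5 ^ 2 ∈ S := hb 33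
  have r18 : T 1 * T 8 ^ 2 ∈ S := by
    have e : T 1 * T 8 ^ 2 = (-1 : ℂ) • (T 0 * T 0 ^ 2) + (1 : ℂ) • (T 0 * T 1 ^ 2) + (1 : ℂ) • (T 1 * T 0 ^ 2) + (-1 : ℂ) • (T 1 * T 1 ^ 2) + (-2 : ℂ) • (T 2 * T 0 ^ 2) + (2 : ℂ) • (T 2 * T 1 ^ 2) + (2 : ℂ) • (T 3 * T 0 ^ 2) + (-2 : ℂ) • (T 3 * T 1 ^ 2) + (2 : ℂ) • (T 4 * T 0 ^ 2) + (-2 : ℂ) • (T 4 * T 1 ^ 2) + (1 : ℂ) • (T 0 * T 5 ^ 2) + (-1 : ℂ) • (T 0 * T 8 ^ 2) + (1 : ℂ) • (T 1 * T 5 ^ 2) := by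
      simp only [h5, h6, h7, h8, h9, Algebra.smul_def, map_neg, map_one, map_ofNat]; ring
    rw [e]
    exact S.add_mem (S.add_mem (S.add_mem (S.add_mem (S.add_mem (S.add_mem (S.add_mem (S.add_mem (S.add_mem (S.add_mem (S.add_mem (S.add_mem (S.smul_mem _ b00) (S.smul_mem _ b01)) (S.smul_mem _ b10)) (S.smul_mem _ b11)) (S.smul_mem _ b20)) (S.smul_mem _ b21)) (S.smul_mem _ b30)) (S.smul_mem _ b31)) (S.smul_mem _ b40)) (S.smul_mem _ b41)) (S.smul_mem _ b05)) (S.smul_mem _ b08)) (S.smul_mem _ b15)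
  have r19 : T 1 * T 9 ^ 2 ∈ S := by
    have e : T 1 * T 9 ^ 2 = (1 : ℂ) • (T 0 * T 0 ^ 2) + (-1 : ℂ) • (T 0 * T 1 ^ 2) + (1 : ℂ) • (T 0 * T 4 ^ 2) + (-1 : ℂ) • (T 1 * T 0 ^ 2) + (1 : ℂ) • (T 1 * T 1 ^ 2) + (1 : ℂ) • (T 1 * T 4 ^ 2) + (-2 : ℂ) • (T 4 * T 0 ^ 2) + (2 : ℂ) • (T 4 * T 1 ^ 2) + (-1 : ℂ) • (T 0 * T 9 ^ 2) := by
      simp only [h5, h6, h7, h8, h9, Algebra.smul_def, map_neg, map_one, map_ofNat]; ring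
    rw [e]
    exact S.add_mem (S.add_mem (S.add_mem (S.add_mem (S.add_mem (S.add_mem (S.add_mem (S.add_mem (S.smul_mem _ b00) (S.smul_mem _ b01)) (S.smul_mem _ b04)) (S.smul_mem _ b10)) (S.smul_mem _ b11)) (S.smul_mem _ b14)) (S.smul_mem _ b40)) (S.smul_mem _ b41)) (S.smul_mem _ b09)
  have r26 : T 2 * T 6 ^ 2 ∈ S := by
    have e : T 2 * T 6 ^ 2 = (1 : ℂ) • (T 1 * T 1 ^ 2) + (-1 : ℂ) • (T 1 * T 2 ^ 2) + (1 : ℂ) • (T 1 * T 4 ^ 2) + (-1 : ℂ) • (T 2 * T 1 ^ 2) + (1 : ℂ) • (T 2 * T 2 ^ 2) + (1 : ℂ) • (T 2 * T 4 ^ 2) + (2 : ℂ) • (T 4 * T 1 ^ 2) + (-2 : ℂ) • (T 4 * T 2 ^ 2) + (-1 : ℂ) • (T 1 * T 6 ^ 2) := by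
      simp only [h5, h6, h7, h8, h9, Algebra.smul_def, map_neg, map_one, map_ofNat]; ring
    rw [e]
    exact S.add_mem (S.add_mem (S.add_mem (S.add_mem (S.add_mem (S.add_mem (S.add_mem (S.add_mem (S.smul_mem _ b11) (S.smul_mem _ b12)) (S.smul_mem _ b14)) (S.smul_mem _ b21)) (S.smul_mem _ b22)) (S.smul_mem _ b24)) (S.smul_mem _ b41)) (S.smul_mem _ b42)) (S.smul_mem _ b16)
  have r27 : T 2 * T 7 ^ 2 ∈ S := by
    have e : T 2 * T 7 ^ 2 = (2 : ℂ) • (T 0 * T 1 ^ 2) + (-2 : ℂ) • (T 0 * T 2 ^ 2) + (-1 : ℂ) • (T 1 * T 1 ^ 2) + (1 : ℂ) • (T 1 * T 2 ^ 2) + (1 : ℂ) • (T 2 * T 1 ^ 2) + (-1 : ℂ) • (T 2 * T 2 ^ 2) + (-2 : ℂ) • (T 3 * T 1 ^ 2) + (2 : ℂ) • (T 3 * T 2 ^ 2) + (-2 : ℂ) • (T 4 * T 1 ^ 2) + (2 : ℂ) • (T 4 * T 2 ^ 2) + (1 : ℂ) • (T 1 * T 5 ^ 2) + (-1 : ℂ)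 • (T 1 * T 7 ^ 2) + (1 : ℂ) • (T 2 * T 5 ^ 2) := by
      simp only [h5, h6, h7, h8, h9, Algebra.smul_def, map_neg, map_one, map_ofNat]; ring
    rw [e]
    exact S.add_mem (S.add_mem (S.add_mem (S.add_mem (S.add_mem (S.add_mem (S.add_mem (S.add_mem (S.add_mem (S.add_mem (S.add_mem (S.add_mem (S.smul_mem _ b01) (S.smul_mem _ b02)) (S.smul_mem _ b11)) (S.smul_mem _ b12)) (S.smul_mem _ b21)) (S.smul_mem _ b22)) (S.smul_mem _ b31)) (S.smul_mem _ b32)) (S.smul_mem _ b41)) (S.smul_mem _ b42)) (S.smul_mem _ b15)) (S.smul_mem _ b17)) (S.smul_mem _ b25)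
  have r28 : T 2 * T 8 ^ 2 ∈ S := by
    have e : T 2 * T 8 ^ 2 = (-1 : ℂ) • (T 0 * T 0 ^ 2) + (2 : ℂ) • (T 0 * T 1 ^ 2) + (-1 : ℂ) • (T 0 * T 2 ^ 2) + (-1 : ℂ) • (T 1 * T 1 ^ 2) + (1 : ℂ) • (T 1 * T 2 ^ 2) + (-1 : ℂ) • (T 2 * T 0 ^ 2) + (1 : ℂ) • (T 2 * T 1 ^ 2) + (2 : ℂ) • (T 3 * T 0 ^ 2) + (-2 : ℂ) • (T 3 * T 1 ^ 2) + (2 : ℂ) • (T 4 * T 0 ^ 2) + (-2 : ℂ) • (T 4 * T 1 ^ 2) + (1 : ℂ) • (T 0 * T 7 ^ 2) + (-1 : ℂ) • (T 0 * T 8 ^ 2) + (1 : ℂ) • (T 1 * T 5 ^ 2) + (-1 : ℂ) • (T 1 * T 7 ^ 2) + (1 : ℂ) • (T 2 * T 5 ^ 2) := by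
      simp only [h5, h6, h7, h8, h9, Algebra.smul_def, map_neg, map_one, map_ofNat]; ring
    rw [e]
    exact S.add_mem (S.add_mem (S.add_mem (S.add_mem (S.add_mem (S.add_mem (S.add_mem (S.add_mem (S.add_mem (S.add_mem (S.add_mem (S.add_mem (S.add_mem (S.add_mem (S.add_mem (S.smul_mem _ b00) (S.smul_mem _ b01)) (S.smul_mem _ b02)) (S.smul_mem _ b11)) (S.smul_mem _ b12)) (S.smul_mem _ b20)) (S.smul_mem _ b21)) (S.smul_mem _ b30)) (S.smul_mem _ b31)) (S.smul_mem _ b40)) (S.smul_mem _ b41)) (S.smul_mem _ b07)) (S.smul_mem _ b08)) (S.smul_mem _ b15)) (S.smul_mem _ b17)) (S.smul_mem _ b25)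
  have r29 : T 2 * T 9 ^ 2 ∈ S := by
    have e : T 2 * T 9 ^ 2 = (1 : ℂ) • (T 0 * T 0 ^ 2) + (-1 : ℂ) • (T 0 * T 2 ^ 2) + (-2 : ℂ) • (T 1 * T 0 ^ 2) + (1 : ℂ) • (T 1 * T 1 ^ 2) + (1 : ℂ) • (T 1 * T 2 ^ 2) + (1 : ℂ) • (T 1 * T 4 ^ 2) + (1 : ℂ) • (T 2 * T 0 ^ 2) + (-1 : ℂ) • (T 2 * T 1 ^ 2) + (1 : ℂ) • (T 2 * T 4 ^ 2) + (-2 : ℂ) • (T 4 * T 0 ^ 2) + (2 : ℂ) • (T 4 * T 1 ^ 2) + (1 : ℂ) • (T 0 * T 6 ^ 2) + (-1 : ℂ) • (T 0 * T 9 ^ 2) + (-1 : ℂ) • (T 1 * T 6 ^ 2) := by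
      simp only [h5, h6, h7, h8, h9, Algebra.smul_def, map_neg, map_one, map_ofNat]; ring
    rw [e]
    exact S.add_mem (S.add_mem (S.add_mem (S.add_mem (S.add_mem (S.add_mem (S.add_mem (S.add_mem (S.add_mem (S.add_mem (S.add_mem (S.add_mem (S.add_mem (S.smul_mem _ b00) (S.smul_mem _ b02)) (S.smul_mem _ b10)) (S.smul_mem _ b11)) (S.smul_mem _ b12)) (S.smul_mem _ b14)) (S.smul_mem _ b20)) (S.smul_mem _ b21)) (S.smul_mem _ b24)) (S.smul_mem _ b40)) (S.smul_mem _ b41)) (S.smul_mem _ b06)) (S.smul_mem _ b09)) (S.smul_mem _ b16)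
  have r35 : T 3 * T 5 ^ 2 ∈ S := by
    have e : T 3 * T 5 ^ 2 = (1 : ℂ) • (T 0 * T 0 ^ 2) + (-1 : ℂ) • (T 0 * T 1 ^ 2) + (1 : ℂ) • (T 0 * T 2 ^ 2) + (-1 : ℂ) • (T 0 * T 3 ^ 2) + (-1 : ℂ) • (T 1 * T 0 ^ 2) + (1 : ℂ) • (T 1 * T 1 ^ 2) + (-1 : ℂ) • (T 1 * T 2 ^ 2) + (1 : ℂ) • (T 1 * T 3 ^ 2) + (1 : ℂ) • (T 2 * T 0 ^ 2) + (-1 : ℂ) • (T 2 * T 1 ^ 2) + (1 : ℂ) • (T 2 * T 2 ^ 2) + (-1 : ℂ) • (T 2 * T 3 ^ 2) + (1 : ℂ) • (T 2 * T 4 ^ 2) + (-1 : ℂ) • (T 3 * T 0 ^ 2) + (1 : ℂ) • (T 3 * T 1 ^ 2) + (-1 : ℂ) • (T 3 * T 2 ^ 2) + (1 : ℂ) • (T 3 * T 3 ^ 2) + (1 : ℂ) • (T 3 * T 4 ^ 2) + (-2 : ℂ) • (T 4 * T 0 ^ 2) + (2 : ℂ) • (T 4 * T 1 ^ 2) + (-2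 : ℂ) • (T 4 * T 2 ^ 2) + (2 : ℂ) • (T 4 * T 3 ^ 2) + (1 : ℂ) • (T 0 * T 6 ^ 2) + (-1 : ℂ) • (T 0 * T 7 ^ 2) + (-1 : ℂ) • (T 1 * T 6 ^ 2) + (1 : ℂ) • (T 1 * T 7 ^ 2) + (-1 : ℂ) • (T 2 * T 5 ^ 2) := by
      simp only [h5, h6, h7, h8, h9, Algebra.smul_def, map_neg, map_one, map_ofNat]; ring
    rw [e]
    exact S.add_mem (S.add_mem (S.add_mem (S.add_mem (S.add_mem (S.add_mem (S.add_mem (S.add_mem (S.add_mem (S.add_mem (S.add_mem (S.add_mem (S.add_mem (S.add_mem (S.add_mem (S.add_mem (S.add_mem (S.add_mem (S.add_mem (S.add_mem (S.add_mem (S.add_mem (S.add_mem (S.add_mem (S.add_mem (S.add_mem (S.smul_mem _ b00) (S.smul_mem _ b01)) (S.smul_mem _ b02)) (S.smul_mem _ b03)) (S.smul_mem _ b10)) (S.smul_mem _ b11)) (S.smul_mem _ b12)) (S.smul_mem _ b13)) (S.smul_mem _ b20)) (S.smul_mem _ b21)) (S.smul_mem _ b22)) (S.smul_mem _ b23)) (S.smul_mem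 _ b24)) (S.smul_mem _ b30)) (S.smul_mem _ b31)) (S.smul_mem _ b32)) (S.smul_mem _ b33)) (S.smul_mem _ b34)) (S.smul_mem _ b40)) (S.smul_mem _ b41)) (S.smul_mem _ b42)) (S.smul_mem _ b43)) (S.smul_mem _ b06)) (S.smul_mem _ b07)) (S.smul_mem _ b16)) (S.smul_mem _ b17)) (S.smul_mem _ b25)
  have r36 : T 3 * T 6 ^ 2 ∈ S := by
    have e : T 3 * T 6 ^ 2 = (-1 : ℂ) • (T 0 * T 1 ^ 2) + (1 : ℂ) • (T 0 * T 2 ^ 2) + (1 : ℂ) • (T 1 * T 0 ^ 2) + (1 : ℂ) • (T 1 * T 1 ^ 2) + (-1 : ℂ) • (T 1 * T 2 ^ 2) + (-1 : ℂ) • (T 1 * T 3 ^ 2) + (-1 : ℂ) • (T 2 * T 0 ^ 2) + (-1 : ℂ) • (T 2 * T 1 ^ 2) + (1 : ℂ) • (T 2 * T 2 ^ 2) + (1 : ℂ) • (T 2 * T 3 ^ 2) + (1 : ℂ) • (T 2 * T 4 ^ 2) + (1 : ℂ) • (T 3 * T 1 ^ 2) + (-1 : ℂ) • (T 3 * T 2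 ^ 2) + (1 : ℂ) • (T 3 * T 4 ^ 2) + (2 : ℂ) • (T 4 * T 1 ^ 2) + (-2 : ℂ) • (T 4 * T 2 ^ 2) + (1 : ℂ) • (T 0 * T 5 ^ 2) + (-1 : ℂ) • (T 0 * T 7 ^ 2) + (-1 : ℂ) • (T 1 * T 6 ^ 2) + (1 : ℂ) • (T 1 * T 7 ^ 2) + (-1 : ℂ) • (T 2 * T 5 ^ 2) := by
      simp only [h5, h6, h7, h8, h9, Algebra.smul_def, map_neg, map_one, map_ofNat]; ring
    rw [e]
    exact S.add_mem (S.add_mem (S.add_mem (S.add_mem (S.add_mem (S.add_mem (S.add_mem (S.add_mem (S.add_mem (S.add_mem (S.add_mem (S.add_mem (S.add_mem (S.add_mem (S.add_mem (S.add_mem (S.add_mem (S.add_mem (S.add_mem (S.add_mem (S.smul_mem _ b01) (S.smul_mem _ b02)) (S.smul_mem _ b10)) (S.smul_mem _ b11)) (S.smul_mem _ b12)) (S.smul_mem _ b13)) (S.smul_mem _ b20)) (S.smul_mem _ b21)) (S.smul_mem _ b22)) (S.smul_mem _ b23)) (S.smul_mem _ b24)) (S.smul_mem _ b31)) (S.smul_mem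 _ b32)) (S.smul_mem _ b34)) (S.smul_mem _ b41)) (S.smul_mem _ b42)) (S.smul_mem _ b05)) (S.smul_mem _ b07)) (S.smul_mem _ b16)) (S.smul_mem _ b17)) (S.smul_mem _ b25)
  have r37 : T 3 * T 7 ^ 2 ∈ S := by
    have e : T 3 * T 7 ^ 2 = (1 : ℂ) • (T 0 * T 0 ^ 2) + (-1 : ℂ) • (T 0 * T 3 ^ 2) + (1 : ℂ) • (T 0 * T 4 ^ 2) + (-1 : ℂ) • (T 3 * T 0 ^ 2) + (1 : ℂ) • (T 3 * T 3 ^ 2) + (1 : ℂ) • (T 3 * T 4 ^ 2) + (-2 : ℂ) • (T 4 * T 0 ^ 2) + (2 : ℂ) • (T 4 * T 3 ^ 2) + (-1 : ℂ) • (T 0 * T 7 ^ 2) := by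
      simp only [h5, h6, h7, h8, h9, Algebra.smul_def, map_neg, map_one, map_ofNat]; ring
    rw [e]
    exact S.add_mem (S.add_mem (S.add_mem (S.add_mem (S.add_mem (S.add_mem (S.add_mem (S.add_mem (S.smul_mem _ b00) (S.smul_mem _ b03)) (S.smul_mem _ b04)) (S.smul_mem _ b30)) (S.smul_mem _ b33)) (S.smul_mem _ b34)) (S.smul_mem _ b40)) (S.smul_mem _ b43)) (S.smul_mem _ b07)
  have r38 : T 3 * T 8 ^ 2 ∈ S := by
    have e : T 3 * T 8 ^ 2 = (1 : ℂ) • (T 0 * T 0 ^ 2) + (-2 : ℂ) • (T 0 * T 1 ^ 2) + (1 : ℂ) • (T 0 * T 2 ^ 2) + (1 : ℂ) • (T 1 * T 1 ^ 2) + (-1 : ℂ) • (T 1 * T 2 ^ 2) + (1 : ℂ) • (T 2 * T 0 ^ 2) + (-1 : ℂ) • (T 2 * T 1 ^ 2) + (1 : ℂ) • (T 2 * T 2 ^ 2) + (-1 : ℂ) • (T 2 * T 3 ^ 2) + (1 : ℂ) • (T 2 * T 4 ^ 2) + (-2 : ℂ) • (T 3 * T 0 ^ 2) + (2 : ℂ)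 • (T 3 * T 1 ^ 2) + (-1 : ℂ) • (T 3 * T 2 ^ 2) + (1 : ℂ) • (T 3 * T 3 ^ 2) + (1 : ℂ) • (T 3 * T 4 ^ 2) + (-2 : ℂ) • (T 4 * T 0 ^ 2) + (2 : ℂ) • (T 4 * T 1 ^ 2) + (-2 : ℂ) • (T 4 * T 2 ^ 2) + (2 : ℂ) • (T 4 * T 3 ^ 2) + (-1 : ℂ) • (T 0 * T 7 ^ 2) + (1 : ℂ) • (T 0 * T 8 ^ 2) + (-1 : ℂ) • (T 1 * T 5 ^ 2) + (1 : ℂ) • (T 1 * T 7 ^ 2) + (-1 : ℂ) • (T 2 * T 5 ^ 2) := by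
      simp only [h5, h6, h7, h8, h9, Algebra.smul_def, map_neg, map_one, map_ofNat]; ring
    rw [e]
    exact S.add_mem (S.add_mem (S.add_mem (S.add_mem (S.add_mem (S.add_mem (S.add_mem (S.add_mem (S.add_mem (S.add_mem (S.add_mem (S.add_mem (S.add_mem (S.add_mem (S.add_mem (S.add_mem (S.add_mem (S.add_mem (S.add_mem (S.add_mem (S.add_mem (S.add_mem (S.add_mem (S.smul_mem _ b00) (S.smul_mem _ b01)) (S.smul_mem _ b02)) (S.smul_mem _ b11)) (S.smul_mem _ b12)) (S.smul_mem _ b20)) (S.smul_mem _ b21)) (S.smul_mem _ b22)) (S.smul_mem _ b23)) (S.smul_mem _ b24)) (S.smul_mem _ b30)) (S.smul_mem _ b31)) (S.smul_mem _ b32)) (S.smul_mem _ b33)) (S.smul_mem _ b34)) (S.smul_mem _ b40)) (S.smul_mem _ b41)) (S.smul_mem _ b42)) (S.smul_mem _ b43)) (S.smul_mem _ b07)) (S.smul_mem _ b08)) (S.smul_mem _ b15)) (S.smul_mem _ b17)) (S.smul_mem _ b25)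
  have r39 : T 3 * T 9 ^ 2 ∈ S := by
    have e : T 3 * T 9 ^ 2 = (-1 : ℂ) • (T 0 * T 1 ^ 2) + (1 : ℂ) • (T 0 * T 3 ^ 2) + (1 : ℂ) • (T 1 * T 0 ^ 2) + (-1 : ℂ) • (T 1 * T 3 ^ 2) + (-1 : ℂ) • (T 1 * T 4 ^ 2) + (-1 : ℂ) • (T 3 * T 0 ^ 2) + (1 : ℂ) • (T 3 * T 1 ^ 2) + (1 : ℂ) • (T 3 * T 4 ^ 2) + (-1 : ℂ) • (T 0 * T 7 ^ 2) + (1 : ℂ) • (T 0 * T 9 ^ 2) + (1 : ℂ) • (T 1 * T 7 ^ 2) := by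
      simp only [h5, h6, h7, h8, h9, Algebra.smul_def, map_neg, map_one, map_ofNat]; ring
    rw [e]
    exact S.add_mem (S.add_mem (S.add_mem (S.add_mem (S.add_mem (S.add_mem (S.add_mem (S.add_mem (S.add_mem (S.add_mem (S.smul_mem _ b01) (S.smul_mem _ b03)) (S.smul_mem _ b10)) (S.smul_mem _ b13)) (S.smul_mem _ b14)) (S.smul_mem _ b30)) (S.smul_mem _ b31)) (S.smul_mem _ b34)) (S.smul_mem _ b07)) (S.smul_mem _ b09)) (S.smul_mem _ b17)
  have r45 : T 4 * T 5 ^ 2 ∈ S := by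
    have e : T 4 * T 5 ^ 2 = (1 : ℂ) • (T 0 * T 0 ^ 2) + (-2 : ℂ) • (T 0 * T 1 ^ 2) + (2 : ℂ) • (T 0 * T 2 ^ 2) + (1 : ℂ) • (T 0 * T 3 ^ 2) + (1 : ℂ) • (T 1 * T 0 ^ 2) + (-2 : ℂ) • (T 1 * T 2 ^ 2) + (-1 : ℂ) • (T 1 * T 3 ^ 2) + (-1 : ℂ) • (T 2 * T 0 ^ 2) + (1 : ℂ) • (T 2 * T 1 ^ 2) + (1 : ℂ) • (T 2 * T 2 ^ 2) + (1 : ℂ) • (T 2 * T 3 ^ 2) + (-1 : ℂ) • (T 2 * T 4 ^ 2) + (-2 : ℂ) • (T 3 * T 0 ^ 2) + (2 : ℂ) • (T 3 * T 1 ^ 2) + (-2 : ℂ) • (T 3 * T 2 ^ 2) + (2 : ℂ) • (T 3 * T 4 ^ 2) + (-1 : ℂ) • (T 4 * T 0 ^ 2) + (1 : ℂ) • (T 4 * T 1 ^ 2) + (-1 : ℂ) • (T 4 * T 2 ^ 2) + (1 : ℂ) • (T 4 * T 3 ^ 2) + (1 : ℂ) • (T 4 * T 4 ^ 2) + (1 :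 ℂ) • (T 0 * T 5 ^ 2) + (-1 : ℂ) • (T 0 * T 6 ^ 2) + (-2 : ℂ) • (T 0 * T 7 ^ 2) + (-1 : ℂ) • (T 1 * T 5 ^ 2) + (1 : ℂ) • (T 1 * T 6 ^ 2) + (2 : ℂ) • (T 1 * T 7 ^ 2) + (-1 : ℂ) • (T 2 * T 5 ^ 2) := by
      simp only [h5, h6, h7, h8, h9, Algebra.smul_def, map_neg, map_one, map_ofNat]; ring
    rw [e]
    exact S.add_mem (S.add_mem (S.add_mem (S.add_mem (S.add_mem (S.add_mem (S.add_mem (S.add_mem (S.add_mem (S.add_mem (S.add_mem (S.add_mem (S.add_mem (S.add_mem (S.add_mem (S.add_mem (S.add_mem (S.add_mem (S.add_mem (S.add_mem (S.add_mem (S.add_mem (S.add_mem (S.add_mem (S.add_mem (S.add_mem (S.add_mem (S.smul_mem _ b00) (S.smul_mem _ b01)) (S.smul_mem _ b02)) (S.smul_mem _ b03)) (S.smul_mem _ b10)) (S.smul_mem _ b12)) (S.smul_mem _ b13)) (S.smul_mem _ b20)) (S.smul_mem _ b21)) (S.smul_mem _ b22)) (S.smul_mem _ b23)) (S.smul_mem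 _ b24)) (S.smul_mem _ b30)) (S.smul_mem _ b31)) (S.smul_mem _ b32)) (S.smul_mem _ b34)) (S.smul_mem _ b40)) (S.smul_mem _ b41)) (S.smul_mem _ b42)) (S.smul_mem _ b43)) (S.smul_mem _ b44)) (S.smul_mem _ b05)) (S.smul_mem _ b06)) (S.smul_mem _ b07)) (S.smul_mem _ b15)) (S.smul_mem _ b16)) (S.smul_mem _ b17)) (S.smul_mem _ b25)
  have r46 : T 4 * T 6 ^ 2 ∈ S := by
    have e : T 4 * T 6 ^ 2 = (-1 : ℂ) • (T 1 * T 1 ^ 2) + (-1 : ℂ) • (T 1 * T 2 ^ 2) + (1 : ℂ) • (T 1 * T 4 ^ 2) + (2 : ℂ) • (T 2 * T 1 ^ 2) + (-2 : ℂ) • (T 2 * T 4 ^ 2) + (-1 : ℂ) • (T 4 * T 1 ^ 2) + (1 : ℂ) • (T 4 * T 2 ^ 2) + (1 : ℂ) • (T 4 * T 4 ^ 2) + (1 : ℂ) • (T 1 * T 6 ^ 2) := by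
      simp only [h5, h6, h7, h8, h9, Algebra.smul_def, map_neg, map_one, map_ofNat]; ring
    rw [e]
    exact S.add_mem (S.add_mem (S.add_mem (S.add_mem (S.add_mem (S.add_mem (S.add_mem (S.add_mem (S.smul_mem _ b11) (S.smul_mem _ b12)) (S.smul_mem _ b14)) (S.smul_mem _ b21)) (S.smul_mem _ b24)) (S.smul_mem _ b41)) (S.smul_mem _ b42)) (S.smul_mem _ b44)) (S.smul_mem _ b16)
  have r47 : T 4 * T 7 ^ 2 ∈ S := by
    have e : T 4 * T 7 ^ 2 = (1 : ℂ) • (T 0 * T 0 ^ 2) + (1 : ℂ) • (T 0 * T 3 ^ 2) + (-1 : ℂ) • (T 0 * T 4 ^ 2) + (-2 : ℂ) • (T 3 * T 0 ^ 2) + (2 : ℂ) • (T 3 * T 4 ^ 2) + (-1 : ℂ) • (T 4 * T 0 ^ 2) + (1 : ℂ) • (T 4 * T 3 ^ 2) + (1 : ℂ) • (T 4 * T 4 ^ 2) + (-1 : ℂ) • (T 0 * T 7 ^ 2) := by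
      simp only [h5, h6, h7, h8, h9, Algebra.smul_def, map_neg, map_one, map_ofNat]; ring
    rw [e]
    exact S.add_mem (S.add_mem (S.add_mem (S.add_mem (S.add_mem (S.add_mem (S.add_mem (S.add_mem (S.smul_mem _ b00) (S.smul_mem _ b03)) (S.smul_mem _ b04)) (S.smul_mem _ b30)) (S.smul_mem _ b34)) (S.smul_mem _ b40)) (S.smul_mem _ b43)) (S.smul_mem _ b44)) (S.smul_mem _ b07)
  have r48 : T 4 * T 8 ^ 2 ∈ S := by
    have e : T 4 * T 8 ^ 2 = (1 : ℂ) • (T 0 * T 0 ^ 2) + (-2 : ℂ) • (T 0 * T 1 ^ 2) + (1 : ℂ) • (T 0 * T 2 ^ 2) + (1 : ℂ) • (T 1 * T 1 ^ 2) + (-1 : ℂ) • (T 1 * T 2 ^ 2) + (1 : ℂ) • (T 2 * T 0 ^ 2) + (-1 : ℂ) • (T 2 * T 1 ^ 2) + (1 : ℂ) • (T 2 * T 2 ^ 2) + (1 : ℂ) • (T 2 * T 3 ^ 2) + (-1 : ℂ) • (T 2 * T 4 ^ 2) + (-2 : ℂ) • (T 3 * T 0 ^ 2) + (2 : ℂ)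 • (T 3 * T 1 ^ 2) + (-2 : ℂ) • (T 3 * T 2 ^ 2) + (2 : ℂ) • (T 3 * T 4 ^ 2) + (-2 : ℂ) • (T 4 * T 0 ^ 2) + (2 : ℂ) • (T 4 * T 1 ^ 2) + (-1 : ℂ) • (T 4 * T 2 ^ 2) + (1 : ℂ) • (T 4 * T 3 ^ 2) + (1 : ℂ) • (T 4 * T 4 ^ 2) + (-1 : ℂ) • (T 0 * T 7 ^ 2) + (1 : ℂ) • (T 0 * T 8 ^ 2) + (-1 : ℂ) • (T 1 * T 5 ^ 2) + (1 : ℂ) • (T 1 * T 7 ^ 2) + (-1 : ℂ) • (T 2 * T 5 ^ 2) := by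
      simp only [h5, h6, h7, h8, h9, Algebra.smul_def, map_neg, map_one, map_ofNat]; ring
    rw [e]
    exact S.add_mem (S.add_mem (S.add_mem (S.add_mem (S.add_mem (S.add_mem (S.add_mem (S.add_mem (S.add_mem (S.add_mem (S.add_mem (S.add_mem (S.add_mem (S.add_mem (S.add_mem (S.add_mem (S.add_mem (S.add_mem (S.add_mem (S.add_mem (S.add_mem (S.add_mem (S.add_mem (S.smul_mem _ b00) (S.smul_mem _ b01)) (S.smul_mem _ b02)) (S.smul_mem _ b11)) (S.smul_mem _ b12)) (S.smul_mem _ b20)) (S.smul_mem _ b21)) (S.smul_mem _ b22)) (S.smul_mem _ b23)) (S.smul_mem _ b24)) (S.smul_mem _ b30)) (S.smul_mem _ b31)) (S.smul_mem _ b32)) (S.smul_mem _ b34)) (S.smul_mem _ b40)) (S.smul_mem _ b41)) (S.smul_mem _ b42)) (S.smul_mem _ b43)) (S.smul_mem _ b44)) (S.smul_mem _ b07)) (S.smul_mem _ b08)) (S.smul_mem _ b15)) (S.smul_mem _ b17)) (S.smul_mem _ b25)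
  have r49 : T 4 * T 9 ^ 2 ∈ S := by
    have e : T 4 * T 9 ^ 2 = (1 : ℂ) • (T 0 * T 0 ^ 2) + (1 : ℂ) • (T 0 * T 1 ^ 2) + (-1 : ℂ) • (T 0 * T 4 ^ 2) + (-2 : ℂ) • (T 1 * T 0 ^ 2) + (2 : ℂ) • (T 1 * T 4 ^ 2) + (-1 : ℂ) • (T 4 * T 0 ^ 2) + (1 : ℂ) • (T 4 * T 1 ^ 2) + (1 : ℂ) • (T 4 * T 4 ^ 2) + (-1 : ℂ) • (T 0 * T 9 ^ 2) := by
      simp only [h5, h6, h7, h8, h9, Algebra.smul_def, map_neg, map_one, map_ofNat]; ring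
    rw [e]
    exact S.add_mem (S.add_mem (S.add_mem (S.add_mem (S.add_mem (S.add_mem (S.add_mem (S.add_mem (S.smul_mem _ b00) (S.smul_mem _ b01)) (S.smul_mem _ b04)) (S.smul_mem _ b10)) (S.smul_mem _ b14)) (S.smul_mem _ b40)) (S.smul_mem _ b41)) (S.smul_mem _ b44)) (S.smul_mem _ b09)
  have r0 : ∀ j, T 0 * T j ^ 2 ∈ S := by
    intro j; fin_cases j
    exacts [b00, b01, b02, b03, b04, b05, b06, b07, b08, b09]
  have r1 : ∀ j, T 1 * T j ^ 2 ∈ S := by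
    intro j; fin_cases j
    exacts [b10, b11, b12, b13, b14, b15, b16, b17, r18, r19]
  have r2 : ∀ j, T 2 * T j ^ 2 ∈ S := by
    intro j; fin_cases j
    exacts [b20, b21, b22, b23, b24, b25, r26, r27, r28, r29]
  have r3 : ∀ j, T 3 * T j ^ 2 ∈ S := by
    intro j; fin_cases j
    exacts [b30, b31, b32, b33, b34, r35, r36, r37, r38, r39]
  have r4 : ∀ j, T 4 * T j ^ 2 ∈ S := by
    intro j; fin_cases j
    exacts [b40, b41, b42, b43, b44, r45, r46, r47, r48, r49]
  have q5 : T 5 * T j ^ 2 ∈ S := by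
    rw [h5]; simp only [sub_mul, add_mul]
    exact S.sub_mem (S.sub_mem (S.add_mem (S.sub_mem (r0 j) (r1 j)) (r2 j)) (r3 j)) (r4 j)
  have q6 : T 6 * T j ^ 2 ∈ S := by
    rw [h6]; simp only [sub_mul, add_mul]
    exact S.add_mem (S.sub_mem (r1 j) (r2 j)) (r4 j)
  have q7 : T 7 * T j ^ 2 ∈ S := by
    rw [h7]; simp only [sub_mul, add_mul]
    exact S.sub_mem (S.sub_mem (r0 j) (r3 j)) (r4 j)
  have q8 : T 8 * T j ^ 2 ∈ S := by
    rw [h8]; simp only [sub_mul, add_mul]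
    exact S.sub_mem (S.add_mem (r3 j) (r4 j)) (r2 j)
  have q9 : T 9 * T j ^ 2 ∈ S := by
    rw [h9]; simp only [sub_mul, add_mul]
    exact S.sub_mem (S.sub_mem (r0 j) (r1 j)) (r4 j)
  fin_cases i
  exacts [r0 j, r1 j, r2 j, r3 j, r4 j, q5, q6, q7, q8, q9]

/-- interpolation points as a function -/
def pt (k : Fin 34) : Fin 4 → ℤ := ptL.getD k ![0, 0, 0, 0]

def Lv (i k : Fin 34) : ℕ := (LvL.getD i []).getD k 0

/-- the interpolation matrix -/
def IM : Matrix (Fin 34) (Fin 34) ℤ :=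
  Matrix.of fun k j => qd (pt k) (bI j) ^ 2 * qd (pt k) (bJ j) ^ 4

def Qt (k : Fin 34) (i : Fin 10) : ℕ := (QL.getD k []).getD i 0

def Mt (k j : Fin 34) : ℕ := (MtL.getD j []).getD k 0

set_option maxRecDepth 100000 in
lemma Qt_mod : ∀ (k : Fin 34) (i : Fin 10), qd (pt k) i % 31 = (Qt k i : ℤ) := by
  decide +kernel

set_option maxRecDepth 100000 in
lemma Mt_mod : ∀ k j : Fin 34, Qt k (bI j) ^ 2 * Qt k (bJ j) ^ 4 % 31 = Mt k j := by
  decide +kernel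

/-- dot product of lists -/
def dotL : List ℕ → List ℕ → ℕ
  | a :: l, b :: l' => a * b + dotL l l'
  | _, _ => 0

lemma dotL_eq (n : ℕ) : ∀ l l' : List ℕ, l.length ≤ n →
    dotL l l' = ∑ k : Fin n, l.getD k 0 * l'.getD k 0 := by
  induction n with
  | zero =>
    intro l l' h
    have : l = [] := List.length_eq_zero_iff.mp (by omega)
    subst this
    simp [dotL]
  | succ n ih =>
    intro l l' h
    cases l with
    | nil => simp [dotL]
    | cons a l =>
      cases l' with
      | nil => simp [dotL]
      | cons b l' =>
        rw [Fin.sum_univ_succ, dotL, ih l l' (by simpa using h)]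
        simp

set_option maxRecDepth 100000 in
lemma dot_inv : ∀ i j : Fin 34, dotL (LvL.getD i []) (MtL.getD j []) % 31 = if i = j then 1 else 0 := by
  decide +kernel

lemma LvL_len : ∀ i : Fin 34, (LvL.getD i []).length ≤ 34 := by
  decide +kernel

lemma Mt_inv (i j : Fin 34) : (∑ k, Lv i k * Mt k j) % 31 = if i = j then 1 else 0 := by
  rw [← dot_inv i j, dotL_eq 34 _ _ (LvL_len i)]
  rfl

lemma IM_det : IM.det ≠ 0 := by
  intro h
  have hq (k : Fin 34) (i : Fin 10) : ((qd (pt k) i : ℤ) : ZMod 31) = (Qt k i : ZMod 31) := by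
    have h3 : ((qd (pt k) i % 31 : ℤ) : ZMod 31) = ((qd (pt k) i : ℤ) : ZMod 31) := by
      exact_mod_cast ZMod.intCast_mod (qd (pt k) i) 31
    rw [← h3, Qt_mod k i, Int.cast_natCast]
  have h0 : IM.map (Int.castRingHom (ZMod 31)) = (Matrix.of Mt).map (Nat.castRingHom (ZMod 31)) := by
    ext k j
    rw [Matrix.map_apply, Matrix.map_apply, Matrix.of_apply, ← Mt_mod k j]
    simp only [IM, Matrix.of_apply, eq_intCast, eq_natCast, ZMod.natCast_mod, Int.cast_mul,
      Int.cast_pow, Nat.cast_mul, Nat.cast_pow, hq]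
  have h1 : (Matrix.of Lv).map (Nat.castRingHom (ZMod 31)) * IM.map (Int.castRingHom (ZMod 31)) = 1 := by
    rw [h0, ← Matrix.map_mul]
    ext i j
    have h2 := Mt_inv i j
    rw [Matrix.map_apply, Matrix.mul_apply, Matrix.one_apply]
    have h3 := ZMod.natCast_mod (∑ k, Lv i k * Mt k j) 31
    rw [h2] at h3
    refine Eq.trans h3.symm ?_
    split_ifs <;> simp
  have h4 := congrArg Matrix.det h1
  have h5 : (IM.map (Int.castRingHom (ZMod 31))).det = 0 := by
    have := RingHom.map_det (Int.castRingHom (ZMod 31)) IM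
    rw [h, map_zero] at this
    exact this.symm
  rw [Matrix.det_mul, h5, mul_zero, Matrix.det_one] at h4
  revert h4
  decide

lemma qd_map {R R' : Type*} [CommRing R] [CommRing R'] (φ : R →+* R') (v : Fin 4 → R) (i : Fin 10) :
    φ (qd v i) = qd (fun k => φ (v k)) i := by
  have h2 : φ 2 = 2 := map_ofNat φ 2
  fin_cases i <;> simp [qd, h2]

open MvPolynomial in
lemma qd_hom (i : Fin 10) : (qd (X : Fin 4 → MvPolynomial (Fin 4) ℂ) i).IsHomogeneous 2 := by
  have h (a b : Fin 4) : (X a * X b : MvPolynomial (Fin 4) ℂ).IsHomogeneous 2 :=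
    (isHomogeneous_X _ a).mul (isHomogeneous_X _ b)
  have h' (a : Fin 4) : (X a ^ 2 : MvPolynomial (Fin 4) ℂ).IsHomogeneous 2 := by
    rw [sq]; exact h a a
  have h2 (p : MvPolynomial (Fin 4) ℂ) (hp : p.IsHomogeneous 2) : (2 * p).IsHomogeneous 2 := by
    rw [two_mul]; exact hp.add hp
  fin_cases i
  · exact (((h' 0).add (h' 1)).add (h' 2)).add (h' 3)
  · exact (((h' 0).sub (h' 1)).add (h' 2)).sub (h' 3)
  · exact (((h' 0).add (h' 1)).sub (h' 2)).sub (h' 3)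
  · exact (((h' 0).sub (h' 1)).sub (h' 2)).add (h' 3)
  · exact h2 _ ((h 0 1).add (h 2 3))
  · exact h2 _ ((h 0 1).sub (h 2 3))
  · exact h2 _ ((h 0 2).add (h 1 3))
  · exact h2 _ ((h 0 2).sub (h 1 3))
  · exact h2 _ ((h 0 3).add (h 1 2))
  · exact h2 _ ((h 0 3).sub (h 1 2))

/-- fourth powers of theta constants as functions on the Siegel space -/
noncomputable def T4 (i : Fin 10) : SiegelH2 → ℂ := fun τ => theta (δev i) τ.1 ^ 4

lemma T4_eq (i : Fin 10) (τ : SiegelH2) : T4 i τ = qd (fv τ.1) i ^ 2 := by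
  rw [T4, ← theta_qd τ.2]; ring

open MvPolynomial in
lemma lin_indep : LinearIndependent ℂ (fun x : Fin 34 => T4 (bI x) * T4 (bJ x) ^ 2) := by
  rw [Fintype.linearIndependent_iff]
  intro c hc
  have hP : (∑ x, C (c x) * (qd X (bI x) ^ 2 * qd X (bJ x) ^ 4) : MvPolynomial (Fin 4) ℂ) = 0 := by
    refine alg_indep (d := 12) ?_ ?_
    · refine IsHomogeneous.sum _ _ _ fun x _ => ?_
      have := (isHomogeneous_C (Fin 4) (c x)).mul (((qd_hom (bI x)).pow 2).mul ((qd_hom (bJ x)).pow 4))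
      simpa using this
    · intro τ hτ
      have h1 := congrFun hc ⟨τ, hτ⟩
      simp only [Finset.sum_apply, Pi.smul_apply, Pi.mul_apply, Pi.pow_apply, T4_eq, smul_eq_mul,
        Pi.zero_apply] at h1
      rw [map_sum, ← h1]
      refine Finset.sum_congr rfl fun x _ => ?_
      simp only [map_mul, map_pow, qd_map, eval_C, eval_X]
      ring
  have hM : (IM.map (Int.castRingHom ℂ)).mulVec c = 0 := by
    ext k
    have h1 := congrArg (eval (fun i => ((pt k i : ℤ) : ℂ))) hP
    rw [map_sum, map_zero] at h1
    rw [Matrix.mulVec, dotProduct, Pi.zero_apply, ← h1]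
    refine Finset.sum_congr rfl fun x _ => ?_
    simp only [map_mul, map_pow, qd_map, eval_C, eval_X, Matrix.map_apply, IM, Matrix.of_apply]
    simp only [eq_intCast]
    ring
  have hd : (IM.map (Int.castRingHom ℂ)).det ≠ 0 := by
    have := RingHom.map_det (Int.castRingHom ℂ) IM
    change (Int.castRingHom ℂ) IM.det = (IM.map (Int.castRingHom ℂ)).det at this
    rw [← this]
    simpa using IM_det
  have := Matrix.eq_zero_of_mulVec_eq_zero hd hM
  exact fun i => congrFun this i

/-- the span of the hundred functions `θ⁴[δᵢ]θ⁸[δⱼ]` has dimension exactly 34. -/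
theorem statement16 :
    Module.finrank ℂ ↥(Submodule.span ℂ
      (Set.range fun p : Fin 10 × Fin 10 =>
        fun τ : SiegelH2 => theta (δev p.1) τ.1 ^ 4 * theta (δev p.2) τ.1 ^ 8)) = 34 := by
  have hF : (fun p : Fin 10 × Fin 10 =>
        fun τ : SiegelH2 => theta (δev p.1) τ.1 ^ 4 * theta (δev p.2) τ.1 ^ 8) =
      fun p => T4 p.1 * T4 p.2 ^ 2 := by
    funext p τ
    simp only [T4, Pi.mul_apply, Pi.pow_apply]
    ring
  have hspan : Submodule.span ℂ (Set.range fun p : Fin 10 × Fin 10 => T4 p.1 * T4 p.2 ^ 2) =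
      Submodule.span ℂ (Set.range fun x : Fin 34 => T4 (bI x) * T4 (bJ x) ^ 2) := by
    apply le_antisymm
    · rw [Submodule.span_le]
      rintro _ ⟨p, rfl⟩
      refine mem_all T4 _ ?_ ?_ ?_ ?_ ?_ (fun x => Submodule.subset_span (Set.mem_range_self x)) p.1 p.2 <;>
      · funext τ
        simp only [Pi.add_apply, Pi.sub_apply, T4_eq, qd, Matrix.cons_val]
        ring
    · rw [Submodule.span_le]
      rintro _ ⟨x, rfl⟩
      exact Submodule.subset_span ⟨(bI x, bJ x), rfl⟩
  rw [hF, hspan, finrank_span_eq_card lin_indep]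
  simp

end TwoLoop
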